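/- arXiv:1610.03528 — 10 statements merged into one kernel-verified Lean document; each statement's English description precedes it below -/
import Mathlib

section
/- Let k be a field of characteristic 0 and let P ∈ k[T][X] be a polynomial that is separable of degree n ≥ 1 as a polynomial in X over the rational function field k(T), with nontrivial Galois group G = Gal(N/k(T)) where N is a splitting field of P over k(T). Let Δ(T) and ℓ(T) denote the discriminant and leading coefficient (in X) of P, and let M₁,…,M_r be representatives of all conjugacy classes of maximal subgroups of G, F_i the fixed field of M_i, and f_i(T,X) a monic irreducible polynomial in k[T][X] such that F_i is generated over k(T) by a root of f_i. Suppose t ∈ k satisfies Δ(t)·ℓ(t)·∏_{i=1}^r disc f_i(t,X) ≠ 0. If the multiset of degrees of the irreducible factors of the specialized polynomial P(t,X) ∈ k[X] differs from the multiset of degrees of the irreducible factors of P over k(T), then the Galois group G_t of P(t,X) over k is not isomorphic to G. -/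
open Polynomial

open scoped Pointwise in
theorem aux1 {A B G κ E : Type*} [CommRing A] [CommRing B] [Algebra A B] [Group G] [Finite G]
    [MulSemiringAction G B] [SMulCommClass G A B] [Algebra.IsInvariant A B G]
    [Field κ] [Field E] [Algebra A κ] [Algebra B E] [Algebra κ E] [Algebra A E]
    [IsScalarTower A κ E] [IsScalarTower A B E]
    (h1 : Function.Surjective (algebraMap A κ)) (h2 : Function.Surjective (algebraMap B E)) :
    Normal κ E ∧ ∃ φ : MulAction.stabilizer G (RingHom.ker (algebraMap B E)) →* Gal(E/κ),
      Function.Surjective φ ∧ ∀ σ b, φ σ (algebraMap B E b) = algebraMap B E (σ.val • b) := by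
  let P := RingHom.ker (algebraMap A κ)
  let Q := RingHom.ker (algebraMap B E)
  have : P.IsPrime := RingHom.ker_isPrime _
  have : Q.IsPrime := RingHom.ker_isPrime _
  have : Q.LiesOver P := ⟨by
    ext a
    simp only [P, Q, RingHom.mem_ker, Ideal.mem_comap, Ideal.under]
    rw [← IsScalarTower.algebraMap_apply A B E, IsScalarTower.algebraMap_apply A κ E]
    simp⟩
  let _ : Algebra (A ⧸ P) κ := (RingHom.kerLift (algebraMap A κ)).toAlgebra
  let _ : Algebra (B ⧸ Q) E := (RingHom.kerLift (algebraMap B E)).toAlgebra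
  let _ : Algebra (A ⧸ P) E := ((algebraMap κ E).comp (algebraMap (A ⧸ P) κ)).toAlgebra
  have : IsScalarTower (A ⧸ P) κ E := IsScalarTower.of_algebraMap_eq' rfl
  have : IsScalarTower (A ⧸ P) (B ⧸ Q) E := IsScalarTower.of_algebraMap_eq' (by
    apply Ideal.Quotient.ringHom_ext
    ext a
    change algebraMap κ E (algebraMap A κ a) = algebraMap B E (algebraMap A B a)
    rw [← IsScalarTower.algebraMap_apply, ← IsScalarTower.algebraMap_apply])
  have b1 : Function.Bijective (algebraMap (A ⧸ P) κ) :=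
    ⟨RingHom.kerLift_injective _, fun x => by
      obtain ⟨a, rfl⟩ := h1 x; exact ⟨Ideal.Quotient.mk _ a, rfl⟩⟩
  have b2 : Function.Bijective (algebraMap (B ⧸ Q) E) :=
    ⟨RingHom.kerLift_injective _, fun x => by
      obtain ⟨a, rfl⟩ := h2 x; exact ⟨Ideal.Quotient.mk _ a, rfl⟩⟩
  have f1 : IsFractionRing (A ⧸ P) κ := by
    let _ := ((RingEquiv.ofBijective _ b1).toMulEquiv.isField (Field.toIsField κ)).toField
    let e : (A ⧸ P) ≃ₐ[A ⧸ P] κ := AlgEquiv.ofBijective (Algebra.ofId _ _) b1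
    exact IsLocalization.isLocalization_of_algEquiv _ e
  have f2 : IsFractionRing (B ⧸ Q) E := by
    let _ := ((RingEquiv.ofBijective _ b2).toMulEquiv.isField (Field.toIsField E)).toField
    let e : (B ⧸ Q) ≃ₐ[B ⧸ Q] E := AlgEquiv.ofBijective (Algebra.ofId _ _) b2
    exact IsLocalization.isLocalization_of_algEquiv _ e
  refine ⟨Ideal.IsFractionRing.normal G P Q κ E, IsFractionRing.stabilizerHom G P Q κ E,
    IsFractionRing.stabilizerHom_surjective G P Q κ E, fun σ b => ?_⟩
  exact IsFractionRing.stabilizerHom_apply_apply_mk G P Q κ E σ b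

/-- The whole group stabilises -/
theorem aux2 {A B G κ E : Type*} [CommRing A] [CommRing B] [Algebra A B] [Group G] [Finite G]
    [MulSemiringAction G B] [SMulCommClass G A B] [Algebra.IsInvariant A B G]
    [Field κ] [Field E] [Algebra A κ] [Algebra B E] [Algebra κ E] [Algebra A E]
    [IsScalarTower A κ E] [IsScalarTower A B E]
    (h1 : Function.Surjective (algebraMap A κ)) (h2 : Function.Surjective (algebraMap B E))
    (q : κ[X]) (hq : (q.map (algebraMap κ E)).Splits) (hc : Nat.card G ≤ Nat.card q.Gal) :
    ∀ σ : G, ∃ τ : Gal(E/κ), ∀ b, τ (algebraMap B E b) = algebraMap B E (σ • b) := by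
  obtain ⟨hn, φ, hφ, hφ'⟩ := aux1 (G := G) h1 h2
  have : Fact ((q.map (algebraMap κ E)).Splits) := ⟨hq⟩
  have hs := (Polynomial.Gal.restrict_surjective q E).comp hφ
  have hle := Nat.card_le_card_of_surjective _ hs
  have htop := Subgroup.eq_top_of_le_card _ (hc.trans hle)
  intro σ
  exact ⟨φ ⟨σ, htop ▸ Subgroup.mem_top σ⟩, fun b => hφ' _ b⟩

theorem aux3 {A K N κ : Type*} [CommRing A] [IsDomain A] [IsIntegrallyClosed A]
    [Field K] [Algebra A K] [IsFractionRing A K] [Field N] [Algebra K N] [FiniteDimensional K N]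
    [IsGalois K N] [Field κ] [Algebra A κ] (h1 : Function.Surjective (algebraMap A κ))
    (p : A[X]) (hp : p.Monic) (hps : ((p.map (algebraMap A K)).map (algebraMap K N)).Splits)
    (q : κ[X]) (hq : q ∣ p.map (algebraMap A κ)) (hc : Nat.card Gal(N/K) ≤ Nat.card q.Gal)
    (g : A[X]) (hg : g.Monic) (hgp : g ∣ p) (hgi : Irreducible (g.map (algebraMap A K)))
    (hgs : (g.map (algebraMap A κ)).Separable) : Irreducible (g.map (algebraMap A κ)) := by
  let _ : Algebra A N := ((algebraMap K N).comp (algebraMap A K)).toAlgebra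
  have : IsScalarTower A K N := IsScalarTower.of_algebraMap_eq' rfl
  have : FaithfulSMul A N := by
    rw [faithfulSMul_iff_algebraMap_injective]
    exact (algebraMap K N).injective.comp (IsFractionRing.injective A K)
  let B := integralClosure A N
  have : IsFractionRing B N := integralClosure.isFractionRing_of_finite_extension K N
  let _ := IsIntegralClosure.MulSemiringAction A K N B
  have : Algebra.IsInvariant A B Gal(N/K) := Algebra.isInvariant_of_isGalois A K N B
  have : SMulCommClass Gal(N/K) A B := ⟨fun σ a b => by
    change galRestrict A K N B σ (a • b) = a • galRestrict A K N B σ b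
    exact map_smul _ _ _⟩
  let m := RingHom.ker (algebraMap A κ)
  have : m.IsMaximal := RingHom.ker_isMaximal_of_surjective _ h1
  obtain ⟨Q, hQ, hQm⟩ := Ideal.exists_ideal_over_maximal_of_isIntegral (S := B) m (by
    rw [(RingHom.injective_iff_ker_eq_bot _).1 (FaithfulSMul.algebraMap_injective A B)]
    exact bot_le)
  let E := B ⧸ Q
  let _ : Field E := Ideal.Quotient.field Q
  let e := RingHom.quotientKerEquivOfSurjective h1
  let ι : κ →+* E := (Ideal.quotientMap Q (algebraMap A B) hQm.ge).comp e.symm.toRingHom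
  let _ : Algebra κ E := ι.toAlgebra
  have : IsScalarTower A κ E := IsScalarTower.of_algebraMap_eq (fun a => by
    change _ = Ideal.quotientMap Q (algebraMap A B) hQm.ge (e.symm (algebraMap A κ a))
    have : algebraMap A κ a = e (Ideal.Quotient.mk _ a) := rfl
    rw [this, RingEquiv.symm_apply_apply]
    rfl)
  have h2 : Function.Surjective (algebraMap B E) := Ideal.Quotient.mk_surjective
  -- splitting in B
  have hsp : ∀ g : A[X], g.Monic → g ∣ p →  (g.map (algebraMap A B)).Splits := by
    intro g hg hgp
    have hgN : (g.map (algebraMap A N)).Splits := by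
      refine hps.of_dvd ?_ ?_
      · exact ((hp.map _).map _).ne_zero
      · rw [Polynomial.map_map]
        exact Polynomial.map_dvd _ hgp
    rw [IsScalarTower.algebraMap_eq A B N, ← Polynomial.map_map] at hgN
    refine hgN.of_splits_map_of_injective (FaithfulSMul.algebraMap_injective B N) ?_
    intro x hx
    have hx' : x ∈ (g.map (algebraMap A N)).roots := by
      rwa [IsScalarTower.algebraMap_eq A B N, ← Polynomial.map_map]
    exact ⟨⟨x, _root_.roots_mem_integralClosure hg hx'⟩, rfl⟩
  have hqE : (q.map (algebraMap κ E)).Splits := by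
    refine Polynomial.Splits.of_dvd (g := p.map (algebraMap A E)) ?_ (hp.map _).ne_zero ?_
    · rw [IsScalarTower.algebraMap_eq A B E, ← Polynomial.map_map]
      exact (hsp p hp dvd_rfl).map _
    · rw [IsScalarTower.algebraMap_eq A κ E, ← Polynomial.map_map]
      exact Polynomial.map_dvd _ hq
  have key := aux2 (G := Gal(N/K)) h1 h2 q hqE hc
  have hgB := hsp g hg hgp
  have hgBm : (g.map (algebraMap A B)).Monic := hg.map _
  have hgE : g.map (algebraMap A E) = (g.map (algebraMap A κ)).map (algebraMap κ E) := by
    rw [Polynomial.map_map, ← IsScalarTower.algebraMap_eq A κ E]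
  have hroots : (g.map (algebraMap A E)).roots =
      (g.map (algebraMap A B)).roots.map (algebraMap B E) := by
    rw [IsScalarTower.algebraMap_eq A B E, ← Polynomial.map_map]
    exact hgB.roots_map_of_ne_zero (hgBm.map _).ne_zero
  have hgEs : (g.map (algebraMap A E)).Splits := by
    rw [IsScalarTower.algebraMap_eq A B E, ← Polynomial.map_map]
    exact hgB.map _
  have hd : (g.map (algebraMap A B)).natDegree ≠ 0 := by
    rw [hg.natDegree_map, ← hg.natDegree_map (algebraMap A K)]
    exact hgi.natDegree_pos.ne'
  obtain ⟨b, hb⟩ := Multiset.exists_mem_of_ne_zero (hgB.roots_ne_zero hd)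
  have hrootN : ∀ c ∈ (g.map (algebraMap A B)).roots,
      aeval (algebraMap B N c) (g.map (algebraMap A K)) = 0 := by
    intro c hc
    have := (Polynomial.mem_roots'.1 hc).2
    rw [Polynomial.IsRoot.def, Polynomial.eval_map_algebraMap] at this
    rw [Polynomial.aeval_map_algebraMap, Polynomial.aeval_algebraMap_apply, this, map_zero]
  have hconj : ∀ c ∈ (g.map (algebraMap A B)).roots, ∃ σ : Gal(N/K), σ • b = c := by
    intro c hc
    have hmin : minpoly K (algebraMap B N b) = g.map (algebraMap A K) :=
      (minpoly.eq_of_irreducible_of_monic hgi (hrootN b hb) (hg.map _)).symm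
    obtain ⟨σ, hσ⟩ := minpoly.exists_algEquiv_of_root' (x := algebraMap B N c)
      (Algebra.IsAlgebraic.isAlgebraic (R := K) (algebraMap B N b)) (by rw [hmin]; exact hrootN c hc)
    refine ⟨σ, FaithfulSMul.algebraMap_injective B N ?_⟩
    rw [← hσ]
    exact algebraMap_galRestrict_apply A σ b
  have hbint : IsIntegral κ (algebraMap B E b) := by
    refine ⟨g.map (algebraMap A κ), hg.map _, ?_⟩
    have : algebraMap B E b ∈ (g.map (algebraMap A E)).roots := by
      rw [hroots]; exact Multiset.mem_map_of_mem _ hb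
    have := (Polynomial.mem_roots'.1 this).2
    rwa [hgE, Polynomial.IsRoot.def, Polynomial.eval_map] at this
  let μ := minpoly κ (algebraMap B E b)
  have hdvd : (g.map (algebraMap A κ)) ∣ μ := by
    rw [← Polynomial.map_dvd_map' (algebraMap κ E), ← hgE]
    refine hgEs.dvd_of_roots_le_roots (hg.map _).ne_zero ?_
    rw [Multiset.le_iff_subset]
    · intro x hx
      rw [hroots, Multiset.mem_map] at hx
      obtain ⟨c, hc, rfl⟩ := hx
      obtain ⟨σ, rfl⟩ := hconj c hc
      obtain ⟨τ, hτ⟩ := key σ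
      rw [Polynomial.mem_roots ((minpoly.monic hbint).map _).ne_zero, ← hτ, Polynomial.IsRoot.def,
        Polynomial.eval_map_algebraMap]
      change aeval (τ.toAlgHom _) _ = _
      rw [Polynomial.aeval_algHom_apply, minpoly.aeval, map_zero]
    · rw [hgE]
      exact Polynomial.nodup_roots hgs.map
  have hnu : ¬ IsUnit (g.map (algebraMap A κ)) := by
    intro hu
    have := Polynomial.natDegree_eq_zero_of_isUnit hu
    rw [hg.natDegree_map] at this hd
    exact hd this
  exact ((minpoly.irreducible hbint).dvd_iff.1 hdvd |>.resolve_left hnu).irreducible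
    (minpoly.irreducible hbint)

theorem aux4 {F : Type*} [Field F] (q : F[X]) (s : Multiset F[X]) (hs : ∀ x ∈ s, Irreducible x)
    (hq : q ≠ 0) (h : Associated s.prod q) :
    Multiset.map Polynomial.natDegree (UniqueFactorizationMonoid.factors q) =
      s.map Polynomial.natDegree := by
  have := UniqueFactorizationMonoid.factors_unique
    (fun x hx => UniqueFactorizationMonoid.irreducible_of_factor x hx) hs
    ((UniqueFactorizationMonoid.factors_prod hq).trans h.symm)
  rw [← Multiset.rel_eq, Multiset.rel_map]
  exact this.mono fun a _ b _ hab => Polynomial.natDegree_eq_of_degree_eq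
    (Polynomial.degree_eq_degree_of_associated hab)

theorem aux_prod {M : Type*} [CommMonoid M] (F : Multiset M) (g : M → M)
    (h : ∀ a ∈ F, Associated (g a) a) : Associated (F.map g).prod F.prod := by
  induction F using Multiset.induction with
  | empty => simp
  | cons a s ih =>
    simp only [Multiset.map_cons, Multiset.prod_cons]
    exact (h a (Multiset.mem_cons_self a s)).mul_mul
      (ih fun b hb => h b (Multiset.mem_cons_of_mem hb))

theorem aux5 {A K κ : Type*} [CommRing A] [IsDomain A] [IsIntegrallyClosed A]
    [Field K] [Algebra A K] [IsFractionRing A K] [Field κ] [Algebra A κ]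
    (p : A[X]) (hp : p.Monic)
    (hirr : ∀ g : A[X], g.Monic → g ∣ p → Irreducible (g.map (algebraMap A K)) →
      Irreducible (g.map (algebraMap A κ)))
    (Q : K[X]) (hQ : Associated (p.map (algebraMap A K)) Q)
    (q : κ[X]) (hq : Associated (p.map (algebraMap A κ)) q) :
    Multiset.map Polynomial.natDegree (UniqueFactorizationMonoid.factors q) =
      Multiset.map Polynomial.natDegree (UniqueFactorizationMonoid.factors Q) := by
  have hinj : Function.Injective (Polynomial.map (algebraMap A K)) :=
    Polynomial.map_injective _ (IsFractionRing.injective A K)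
  have hp0 : p.map (algebraMap A K) ≠ 0 := (hp.map _).ne_zero
  have hp0' : p.map (algebraMap A κ) ≠ 0 := (hp.map _).ne_zero
  have hQ0 : Q ≠ 0 := hQ.ne_zero_iff.1 hp0
  have hq0 : q ≠ 0 := hq.ne_zero_iff.1 hp0'
  let F := UniqueFactorizationMonoid.factors (p.map (algebraMap A K))
  have hFi : ∀ a ∈ F, Irreducible a := fun a ha =>
    UniqueFactorizationMonoid.irreducible_of_factor a ha
  have hex : ∀ a ∈ F, ∃ g : A[X], g.Monic ∧ Associated (g.map (algebraMap A K)) a := by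
    intro a ha
    obtain ⟨g, hg⟩ := IsIntegrallyClosed.eq_map_mul_C_of_dvd K hp
      (UniqueFactorizationMonoid.dvd_of_mem_factors ha)
    have hl : a.leadingCoeff ≠ 0 := Polynomial.leadingCoeff_ne_zero.2 (hFi a ha).ne_zero
    refine ⟨g, ?_, ?_⟩
    · have := congrArg Polynomial.leadingCoeff hg
      rw [Polynomial.leadingCoeff_mul, Polynomial.leadingCoeff_C,
        Polynomial.leadingCoeff_map_of_injective (IsFractionRing.injective A K)] at this
      apply IsFractionRing.injective A K
      rw [map_one]
      exact mul_right_cancel₀ hl (by rw [this, one_mul])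
    · exact ⟨(Polynomial.isUnit_C.2 hl.isUnit).unit, hg⟩
  choose! g hgm hga using hex
  let s := F.map g
  have hsm : s.prod.Monic := Polynomial.monic_multiset_prod_of_monic _ _ hgm
  have hsp : s.prod = p := by
    apply hinj
    refine Polynomial.eq_of_monic_of_associated (hsm.map _) (hp.map _) ?_
    refine Associated.trans ?_ (UniqueFactorizationMonoid.factors_prod hp0)
    rw [Polynomial.map_multiset_prod, Multiset.map_map]
    exact aux_prod F _ hga
  have hdvd : ∀ a ∈ F, g a ∣ p := fun a ha =>
    hsp ▸ Multiset.dvd_prod (Multiset.mem_map_of_mem g ha)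
  have hiK : ∀ a ∈ F, Irreducible ((g a).map (algebraMap A K)) := fun a ha =>
    (hga a ha).symm.irreducible (hFi a ha)
  rw [aux4 q (s.map (Polynomial.map (algebraMap A κ))) ?_ hq0 ?_,
    aux4 Q (s.map (Polynomial.map (algebraMap A K))) ?_ hQ0 ?_]
  · simp only [s, Multiset.map_map]
    refine Multiset.map_congr rfl fun a ha => ?_
    simp [(hgm a ha).natDegree_map]
  · intro x hx
    simp only [s, Multiset.map_map, Multiset.mem_map] at hx
    obtain ⟨a, ha, rfl⟩ := hx
    exact hiK a ha
  · rw [← Polynomial.map_multiset_prod, hsp]; exact hQ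
  · intro x hx
    simp only [s, Multiset.map_map, Multiset.mem_map] at hx
    obtain ⟨a, ha, rfl⟩ := hx
    exact hirr _ (hgm a ha) (hdvd a ha) (hiK a ha)
  · rw [← Polynomial.map_multiset_prod, hsp]; exact hq

theorem aux6 {R A K κ : Type*} [CommRing R] [IsDomain R] [IsIntegrallyClosed R]
    [Field K] [Field κ] [Algebra R K] [IsFractionRing R K] [CommRing A] [Algebra R A]
    (P : R[X]) [IsLocalization.Away P.leadingCoeff A]
    (ev : R →+* κ) (hev : Function.Surjective ev)
    (hsep : (P.map (algebraMap R K)).Separable)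
    (hl : ev P.leadingCoeff ≠ 0)
    (hΔ : (P.map ev).Separable)
    (e : (P.map ev).Gal ≃* (P.map (algebraMap R K)).Gal) :
    Multiset.map Polynomial.natDegree (UniqueFactorizationMonoid.factors (P.map ev)) =
      Multiset.map Polynomial.natDegree
        (UniqueFactorizationMonoid.factors (P.map (algebraMap R K))) := by
  set PK := P.map (algebraMap R K) with hPK
  set Pt := P.map ev with hPt
  let l := P.leadingCoeff
  have hl0 : l ≠ 0 := by rintro h; exact hl (by simp only [l] at h; rw [h, map_zero])
  have hM : Submonoid.powers l ≤ nonZeroDivisors R :=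
    powers_le_nonZeroDivisors_of_noZeroDivisors hl0
  have : IsDomain A := IsLocalization.isDomain_of_le_nonZeroDivisors A hM
  have : IsIntegrallyClosed A := isIntegrallyClosed_of_isLocalization A _ hM
  have hu1 : IsUnit (algebraMap R K l) := by
    rw [isUnit_iff_ne_zero]
    exact fun h => hl0 ((map_eq_zero_iff _ (IsFractionRing.injective _ _)).1 h)
  have hu2 : IsUnit (ev l) := isUnit_iff_ne_zero.2 hl
  let _ : Algebra A K := (IsLocalization.Away.lift (S := A) l hu1).toAlgebra
  let _ : Algebra A κ := (IsLocalization.Away.lift (S := A) l hu2).toAlgebra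
  have c1 : (algebraMap A K).comp (algebraMap R A) = algebraMap R K :=
    IsLocalization.Away.lift_comp l hu1
  have c2 : (algebraMap A κ).comp (algebraMap R A) = ev :=
    IsLocalization.Away.lift_comp l hu2
  have : IsScalarTower R A K := IsScalarTower.of_algebraMap_eq' c1.symm
  have : IsFractionRing A K :=
    IsFractionRing.isFractionRing_of_isDomain_of_isLocalization (Submonoid.powers l) A K
  have h1 : Function.Surjective (algebraMap A κ) := fun x => by
    obtain ⟨y, rfl⟩ := hev x
    exact ⟨algebraMap R A y, by rw [← c2]; rfl⟩
  obtain ⟨u, hu⟩ : IsUnit (algebraMap R A l) := IsLocalization.Away.algebraMap_isUnit l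
  let p : A[X] := C (↑u⁻¹ : A) * P.map (algebraMap R A)
  have hp : p.Monic := by
    have hinj : Function.Injective (algebraMap R A) := IsLocalization.injective A hM
    have : (P.map (algebraMap R A)).leadingCoeff = u := by
      rw [Polynomial.leadingCoeff_map_of_injective hinj, hu]
    rw [Polynomial.Monic, Polynomial.leadingCoeff_mul, this, Polynomial.leadingCoeff_C]
    simp
  have has : Associated p (P.map (algebraMap R A)) := by
    have : IsUnit (C (↑u⁻¹ : A)) := Polynomial.isUnit_C.2 (Units.isUnit _)
    refine Associated.symm ⟨this.unit, ?_⟩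
    simp [p, mul_comm]
  have a1 : Associated (p.map (algebraMap A K)) PK := by
    have := has.map (Polynomial.mapRingHom (algebraMap A K))
    rwa [Polynomial.coe_mapRingHom, Polynomial.map_map, c1] at this
  have a2 : Associated (p.map (algebraMap A κ)) Pt := by
    have := has.map (Polynomial.mapRingHom (algebraMap A κ))
    rwa [Polynomial.coe_mapRingHom, Polynomial.map_map, c2] at this
  refine aux5 p hp ?_ PK a1 Pt a2
  intro g hg hgp hgi
  have : IsGalois K PK.SplittingField := IsGalois.of_separable_splitting_field hsep
  refine aux3 (N := PK.SplittingField) h1 p hp ?_ Pt a2.symm.dvd ?_ g hg hgp hgi ?_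
  · refine Polynomial.Splits.of_dvd (Polynomial.SplittingField.splits PK) ?_
      (Polynomial.map_dvd _ a1.dvd)
    exact Polynomial.map_ne_zero hsep.ne_zero
  · exact (Nat.card_congr e.toEquiv).ge
  · exact hΔ.of_dvd ((Polynomial.map_dvd _ hgp).trans a2.dvd)

/-- Theorem `main_hit_thm`(1): With `P ∈ k[T][X]` separable of degree
`n ≥ 1` in `X` over `k(T)` with nontrivial Galois group `G`, maximal-subgroup
representatives `M₁, …, M_r` with fixed fields generated by roots of the monic
irreducible `f_i ∈ k[T][X]`, and `t ∈ k` with `Δ(t)·ℓ(t)·∏ᵢ disc f_i(t,X) ≠ 0`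
(equivalently `ℓ(t) ≠ 0` and the specializations `P(t,X)`, `f_i(t,X)` all separable):
if the factorization type of `P(t,X)` over `k` (the multiset of degrees of its irreducible factors) differs from the factorization type of `P` over `k(T)`, then the
Galois group `G_t` of `P(t,X)` over `k` is not isomorphic to `G`. -/
theorem stmt_0 {k : Type*} [Field k] [CharZero k]
    (P : Polynomial (Polynomial k))
    (hdeg : 1 ≤ P.natDegree)
    (hsep : (P.map (algebraMap (Polynomial k) (RatFunc k))).Separable)
    (hG : Nontrivial (P.map (algebraMap (Polynomial k) (RatFunc k))).Gal)
    (r : ℕ)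
    (M : Fin r → Subgroup (P.map (algebraMap (Polynomial k) (RatFunc k))).Gal)
    (hmax : ∀ i, IsCoatom (M i))
    (hrep : ∀ H : Subgroup (P.map (algebraMap (Polynomial k) (RatFunc k))).Gal,
      IsCoatom H → ∃ i, ∃ g, Subgroup.map (MulAut.conj g).toMonoidHom (M i) = H)
    (f : Fin r → Polynomial (Polynomial k))
    (hmonic : ∀ i, (f i).Monic)
    (hirr : ∀ i, Irreducible (f i))
    (hgen : ∀ i, ∃ θ : (P.map (algebraMap (Polynomial k) (RatFunc k))).SplittingField,
      Polynomial.aeval θ ((f i).map (algebraMap (Polynomial k) (RatFunc k))) = 0 ∧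
        IntermediateField.fixedField (M i) = IntermediateField.adjoin (RatFunc k) {θ})
    (t : k)
    (hl : P.leadingCoeff.eval t ≠ 0)
    (hΔ : (P.map (Polynomial.evalRingHom t)).Separable)
    (hdisc : ∀ i, ((f i).map (Polynomial.evalRingHom t)).Separable)
    (hfact : Multiset.map Polynomial.natDegree
        (UniqueFactorizationMonoid.factors (P.map (Polynomial.evalRingHom t))) ≠
      Multiset.map Polynomial.natDegree
        (UniqueFactorizationMonoid.factors
          (P.map (algebraMap (Polynomial k) (RatFunc k))))) :
    IsEmpty ((P.map (Polynomial.evalRingHom t)).Gal ≃*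
      (P.map (algebraMap (Polynomial k) (RatFunc k))).Gal) := by
  refine ⟨fun e => hfact ?_⟩
  exact aux6 (A := Localization.Away P.leadingCoeff) P (Polynomial.evalRingHom t)
    (fun x => ⟨C x, by simp⟩) hsep hl hΔ e
end

section
/- Let k be a field of characteristic 0 and let P ∈ k[T][X] be a polynomial that is separable of degree n ≥ 1 as a polynomial in X over k(T), with nontrivial Galois group G over k(T). Let Δ(T) and ℓ(T) denote the discriminant and leading coefficient (in X) of P, and let M₁,…,M_r be representatives of all conjugacy classes of maximal subgroups of G, F_i the fixed field of M_i, and f_i(T,X) a monic irreducible polynomial in k[T][X] such that F_i is generated over k(T) by a root of f_i. Suppose t ∈ k satisfies Δ(t)·ℓ(t)·∏_{i=1}^r disc f_i(t,X) ≠ 0. Then the Galois group G_t of the specialized polynomial P(t,X) over k is not isomorphic to G if and only if there exists an index i such that f_i(t,X) has a root in k. -/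
open Polynomial
open scoped Pointwise
universe u

theorem exists_place {A K k : Type*} {N : Type u} [CommRing A] [IsDomain A] [IsIntegrallyClosed A] [Field K]
    [Algebra A K] [IsFractionRing A K] [Field N] [Algebra K N] [Algebra A N] [IsScalarTower A K N]
    [FiniteDimensional K N] [IsGalois K N] [Field k] (φ : A →+* k)
    (hφ : Function.Surjective φ) :
    ∃ (L : Type u) (_ : Field L) (_ : Algebra k L) (ψ : integralClosure A N →+* L)
      (D : Subgroup Gal(N/K)) (ρ : D →* Gal(L/k)),
      Normal k L ∧ Function.Surjective ψ ∧
      (∀ a, ψ (algebraMap A _ a) = algebraMap k L (φ a)) ∧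
      Function.Surjective ρ ∧
      ∀ (d : D) (b b' : integralClosure A N), (b' : N) = d.1 (b : N) → ψ b' = ρ d (ψ b) := by
  let B := integralClosure A N
  have : IsFractionRing B N := integralClosure.isFractionRing_of_finite_extension K N
  let := IsIntegralClosure.MulSemiringAction A K N B
  have : Algebra.IsInvariant A B Gal(N/K) := Algebra.isInvariant_of_isGalois A K N B
  have : SMulCommClass Gal(N/K) A B := ⟨fun g a b => by
    change galRestrict A K N B g (a • b) = a • galRestrict A K N B g b
    simp⟩
  let P : Ideal A := RingHom.ker φ
  have hP : P.IsMaximal := RingHom.ker_isMaximal_of_surjective φ hφ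
  have : FaithfulSMul A N := (faithfulSMul_iff_algebraMap_injective A N).2 (by
    rw [IsScalarTower.algebraMap_eq A K N]
    exact (algebraMap K N).injective.comp (IsFractionRing.injective A K))
  obtain ⟨Q, hQ, hQP⟩ := Ideal.exists_ideal_over_maximal_of_isIntegral (S := B) P (by
    rw [(RingHom.injective_iff_ker_eq_bot (algebraMap A B)).1 (FaithfulSMul.algebraMap_injective A B)]
    exact bot_le)
  have : Q.LiesOver P := ⟨hQP.symm⟩
  let : Field (A ⧸ P) := Ideal.Quotient.field P
  let : Field (B ⧸ Q) := Ideal.Quotient.field Q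
  let e : A ⧸ P ≃+* k := RingHom.quotientKerEquivOfSurjective hφ
  let : Algebra (A ⧸ P) k := e.toRingHom.toAlgebra
  let : Algebra k (B ⧸ Q) := ((algebraMap (A ⧸ P) (B ⧸ Q)).comp e.symm.toRingHom).toAlgebra
  have : IsScalarTower (A ⧸ P) k (B ⧸ Q) := IsScalarTower.of_algebraMap_eq fun x => by
    change _ = algebraMap (A ⧸ P) (B ⧸ Q) (e.symm (e x))
    simp
  have : IsFractionRing (A ⧸ P) k :=
    IsLocalization.isLocalization_of_algEquiv (S := A ⧸ P) _ (AlgEquiv.ofRingEquiv (f := e) fun x => rfl)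
  refine ⟨B ⧸ Q, inferInstance, inferInstance, Ideal.Quotient.mk Q,
    MulAction.stabilizer Gal(N/K) Q, IsFractionRing.stabilizerHom Gal(N/K) P Q k (B ⧸ Q),
    Ideal.IsFractionRing.normal Gal(N/K) P Q k (B ⧸ Q), Ideal.Quotient.mk_surjective, ?_,
    IsFractionRing.stabilizerHom_surjective Gal(N/K) P Q k (B ⧸ Q), ?_⟩
  · intro a
    change _ = algebraMap (A ⧸ P) (B ⧸ Q) (e.symm (φ a))
    have : e.symm (φ a) = Ideal.Quotient.mk P a := by
      rw [RingEquiv.symm_apply_eq]; rfl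
    rw [this]; rfl
  · intro d b b' h
    have := IsFractionRing.stabilizerHom_apply_apply_mk Gal(N/K) P Q k (B ⧸ Q) d b
    rw [Algebra.algebraMap_self, RingHom.id_apply, RingHom.id_apply] at this
    rw [this]
    congr 1
    apply Subtype.ext
    rw [h]
    exact (algebraMap_galRestrict_apply A d.1 b).symm

theorem eq_of_place_eq {A B k L : Type*} [CommRing A] [CommRing B] [IsDomain B] [Algebra A B]
    [Field k] [Field L] [Algebra k L] (φ : A →+* k) (ψ : B →+* L)
    (hψ : ∀ a, ψ (algebraMap A _ a) = algebraMap k L (φ a))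
    (p : A[X]) (hp : (p.map φ).Separable) (b b' : B) (hb : aeval b p = 0) (hb' : aeval b' p = 0)
    (h : ψ b = ψ b') : b = b' := by
  by_contra hne
  have hm : (p.map (algebraMap A B)).map ψ = (p.map φ).map (algebraMap k L) := by
    rw [Polynomial.map_map, Polynomial.map_map]
    congr 1
    exact RingHom.ext hψ
  obtain ⟨q, hq⟩ := (dvd_iff_isRoot (p := p.map (algebraMap A B)) (a := b)).2 (by
    rwa [IsRoot, eval_map_algebraMap])
  have h1 : q.eval b' = 0 := by
    have : (p.map (algebraMap A B)).eval b' = 0 := by rwa [eval_map_algebraMap]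
    rw [hq, eval_mul, mul_eq_zero] at this
    rcases this with h | h
    · simp only [eval_sub, eval_X, eval_C] at h
      exact absurd (sub_eq_zero.1 h).symm hne
    · exact h
  have hs : ((p.map φ).map (algebraMap k L)).Separable := hp.map
  rw [← hm, hq, Polynomial.map_mul] at hs
  have h2 : (q.map ψ).eval (ψ b) = 0 := by
    rw [h, eval_map_apply, h1, map_zero]
  have hc := hs.isCoprime
  obtain ⟨u, v, huv⟩ := hc
  have := congrArg (Polynomial.eval (ψ b)) huv
  simp [h2] at this

theorem splits_of_monic {A N : Type*} [CommRing A] [Field N] [Algebra A N] (p : A[X])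
    (hm : p.Monic) (hs : (p.map (algebraMap A N)).Splits) :
    (p.map (algebraMap A (integralClosure A N))).Splits := by
  have hmm : (p.map (algebraMap A (integralClosure A N))).map
      (algebraMap (integralClosure A N) N) = p.map (algebraMap A N) := by
    rw [Polynomial.map_map, ← IsScalarTower.algebraMap_eq]
  refine Splits.of_splits_map_of_injective (i := algebraMap (integralClosure A N) N)
    Subtype.val_injective ?_ ?_
  · rwa [hmm]
  · intro a ha
    rw [hmm] at ha
    have h0 := isRoot_of_mem_roots ha
    exact ⟨⟨a, ⟨p, hm, by rwa [IsRoot, eval_map] at h0⟩⟩, rfl⟩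

theorem separable_integralNormalization {k : Type*} [Field k] [CharZero k] (p : k[X])
    (hp : p.Separable) : p.integralNormalization.Separable := by
  have hc : p.leadingCoeff ≠ 0 := by simpa using hp.ne_zero
  have h1 := integralNormalization_mul_C_leadingCoeff p
  have h2 : derivative (p.scaleRoots p.leadingCoeff) =
      (derivative p).scaleRoots p.leadingCoeff := by
    ext i
    rw [coeff_derivative, coeff_scaleRoots, coeff_scaleRoots, coeff_derivative,
      natDegree_derivative]
    have : p.natDegree - (i + 1) = p.natDegree - 1 - i := by omega
    rw [this]; ring
  have h3 : (p.scaleRoots p.leadingCoeff).Separable := by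
    rw [separable_def, h2]
    exact isCoprime_scaleRoots _ _ _ (IsUnit.mk0 _ hc) hp
  exact h3.of_dvd ⟨_, h1.symm⟩

theorem splits_of_integralNormalization {k L : Type*} [Field k] [Field L] (i : k →+* L) (p : k[X])
    (h : p ≠ 0) (hp : (p.integralNormalization.map i).Splits) : (p.map i).Splits := by
  have hc : i p.leadingCoeff ≠ 0 := by simpa using h
  have h1 := congrArg (Polynomial.map i) (integralNormalization_mul_C_leadingCoeff p)
  rw [map_scaleRoots _ _ _ hc, Polynomial.map_mul, Polynomial.map_C, mul_comm] at h1
  have h2 := (hp.C_mul (i p.leadingCoeff))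
  rw [h1] at h2
  have h3 := h2.scaleRoots (i p.leadingCoeff)⁻¹
  rwa [← scaleRoots_mul, mul_inv_cancel₀ hc, scaleRoots_one] at h3

theorem main_aux {A K k ι : Type*} {N : Type u} [CommRing A] [IsDomain A] [IsIntegrallyClosed A]
    [Field K] [Algebra A K] [IsFractionRing A K] [Field N] [Algebra K N] [Algebra A N]
    [IsScalarTower A K N] [FiniteDimensional K N] [IsGalois K N] [Field k] [CharZero k]
    (φ : A →+* k) (hφ : Function.Surjective φ)
    (P : A[X]) (hdeg : 1 ≤ P.natDegree) (hspl : (P.map (algebraMap A N)).Splits)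
    (hPgen : ∀ g : Gal(N/K), (∀ α : N, aeval α P = 0 → g α = α) → g = 1)
    (hl : φ P.leadingCoeff ≠ 0) (hΔ : (P.map φ).Separable)
    (M : ι → Subgroup Gal(N/K)) (hmax : ∀ i, IsCoatom (M i))
    (hrep : ∀ H : Subgroup Gal(N/K),
      IsCoatom H → ∃ i, ∃ g, Subgroup.map (MulAut.conj g).toMonoidHom (M i) = H)
    (f : ι → A[X]) (hmonic : ∀ i, (f i).Monic) (θ : ι → N)
    (hroot : ∀ i, aeval (θ i) (f i) = 0)
    (hfs : ∀ i, ((f i).map (algebraMap A N)).Splits)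
    (hconj : ∀ i (β : N), aeval β (f i) = 0 → ∃ g : Gal(N/K), g (θ i) = β)
    (hM : ∀ i (g : Gal(N/K)), g ∈ M i ↔ g (θ i) = θ i)
    (hdisc : ∀ i, ((f i).map φ).Separable) :
    IsEmpty ((P.map φ).Gal ≃* Gal(N/K)) ↔ ∃ i, ∃ x : k, ((f i).map φ).eval x = 0 := by
  obtain ⟨L, _, _, ψ, D, ρ, hN, hψs, hψ, hρ, hρψ⟩ := exists_place (K := K) (N := N) φ hφ
  have hinjA : Function.Injective (algebraMap A N) := by
    rw [IsScalarTower.algebraMap_eq A K N]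
    exact (algebraMap K N).injective.comp (IsFractionRing.injective A K)
  have hP0 : P ≠ 0 := by rintro rfl; simp at hdeg
  have hψ' : ψ.comp (algebraMap A _) = (algebraMap k L).comp φ := RingHom.ext hψ
  have hg : ∀ (g : Gal(N/K)) (p : A[X]) (α : N), aeval α p = 0 → aeval (g α) p = 0 := by
    intro g p α h
    have := aeval_algHom_apply (g.toAlgHom.restrictScalars A) α p
    rw [h, map_zero] at this
    exact this
  -- elements of the integral closure
  have haev : ∀ (p : A[X]) (b : integralClosure A N), aeval (b : N) p = 0 → aeval b p = 0 := by
    intro p b h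
    apply Subtype.val_injective
    have := aeval_algebraMap_apply N b p
    exact this.symm.trans h
  -- distinctness
  have hdist : ∀ (p : A[X]), (p.map φ).Separable → ∀ b b' : integralClosure A N,
      aeval (b : N) p = 0 → aeval (b' : N) p = 0 → ψ b = ψ b' → b = b' :=
    fun p hp b b' hb hb' h => eq_of_place_eq φ ψ hψ p hp b b' (haev p b hb) (haev p b' hb') h
  have hqm : P.integralNormalization.Monic := monic_integralNormalization hP0
  have hqφ : P.integralNormalization.map φ = (P.map φ).integralNormalization :=
    (integralNormalization_map φ P hl).symm
  have hsplL : ∀ p : A[X], p.Monic → (p.map (algebraMap A N)).Splits →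
      ((p.map φ).map (algebraMap k L)).Splits := by
    intro p hm hs
    have := (splits_of_monic p hm hs).map ψ
    rwa [Polynomial.map_map, hψ', ← Polynomial.map_map] at this
  have hPL : ((P.map φ).map (algebraMap k L)).Splits := by
    apply splits_of_integralNormalization _ _ hΔ.ne_zero
    rw [← hqφ]
    apply hsplL _ hqm
    have hlN : algebraMap A N P.leadingCoeff ≠ 0 :=
      (map_ne_zero_iff _ hinjA).2 (leadingCoeff_ne_zero.2 hP0)
    rw [← integralNormalization_map _ _ hlN]
    set p := P.map (algebraMap A N)
    have h1 := integralNormalization_mul_C_leadingCoeff p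
    have h2 := hspl.scaleRoots p.leadingCoeff
    rw [← h1] at h2
    exact h2.of_dvd (by rw [h1]; exact scaleRoots_ne_zero ((Polynomial.map_ne_zero_iff hinjA).2 hP0) _)
      (dvd_mul_right _ _)
  have : Fact ((P.map φ).map (algebraMap k L)).Splits := ⟨hPL⟩
  let τ : D →* (P.map φ).Gal := (Gal.restrict (P.map φ) L).comp ρ
  have hτs : Function.Surjective τ := (Gal.restrict_surjective (P.map φ) L).comp hρ
  have hτi : Function.Injective τ := by
    rw [injective_iff_map_eq_one]
    intro d hd
    apply Subtype.ext
    apply hPgen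
    intro α hα
    have hb0 : aeval (algebraMap A N P.leadingCoeff * α) P.integralNormalization = 0 :=
      integralNormalization_aeval_eq_zero hα fun x hx => (map_eq_zero_iff _ hinjA).1 hx
    set β := algebraMap A N P.leadingCoeff * α with hβ
    let b : integralClosure A N := ⟨β, P.integralNormalization, hqm, hb0⟩
    have hb1 := hg d.1 _ _ hb0
    let b' : integralClosure A N := ⟨d.1 β, P.integralNormalization, hqm, hb1⟩
    have hfix : ρ d (ψ b) = ψ b := by
      set c : L := algebraMap k L (φ P.leadingCoeff) with hc
      have hc0 : c ≠ 0 := by simpa [hc] using hl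
      have hx : aeval (c⁻¹ * ψ b) (P.map φ) = 0 := by
        have h1 := integralNormalization_eval₂_leadingCoeff_mul hdeg ((algebraMap k L).comp φ)
          (c⁻¹ * ψ b)
        have h2 : eval₂ ((algebraMap k L).comp φ) (ψ b) P.integralNormalization = 0 := by
          rw [← hψ', ← hom_eval₂]
          have := haev _ b hb0
          rw [aeval_def] at this
          rw [this, map_zero]
        rw [RingHom.comp_apply, ← hc, mul_inv_cancel_left₀ hc0, h2] at h1
        rw [aeval_def, eval₂_map]
        exact (mul_eq_zero.1 h1.symm).resolve_left (pow_ne_zero _ hc0)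
      have hr : c⁻¹ * ψ b ∈ (P.map φ).rootSet L := by
        rw [mem_rootSet]; exact ⟨hΔ.ne_zero, hx⟩
      have h3 := Gal.restrict_smul (ρ d) (⟨_, hr⟩ : (P.map φ).rootSet L)
      have h4 : Gal.restrict (P.map φ) L (ρ d) = 1 := hd
      rw [h4, one_smul] at h3
      simp only [map_mul, map_inv₀, hc, AlgEquiv.commutes] at h3
      exact (mul_left_cancel₀ (inv_ne_zero hc0) h3).symm
    have h5 : b' = b := by
      refine hdist P.integralNormalization ?_ b' b hb1 hb0 ?_
      · rw [hqφ]; exact separable_integralNormalization _ hΔ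
      · rw [hρψ d b b' rfl, hfix]
    have h6 : d.1 β = β := congrArg Subtype.val h5
    rw [hβ, map_mul, IsScalarTower.algebraMap_apply A K N, AlgEquiv.commutes] at h6
    refine mul_left_cancel₀ ?_ h6
    rw [← IsScalarTower.algebraMap_apply A K N]
    exact (map_ne_zero_iff _ hinjA).2 (leadingCoeff_ne_zero.2 hP0)
  let e : D ≃* (P.map φ).Gal := MulEquiv.ofBijective τ ⟨hτi, hτs⟩
  have hiff : IsEmpty ((P.map φ).Gal ≃* Gal(N/K)) ↔ D ≠ ⊤ := by
    constructor
    · rintro h rfl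
      exact h.elim (e.symm.trans Subgroup.topEquiv)
    · intro h
      refine ⟨fun e' => h ?_⟩
      apply Subgroup.eq_top_of_card_eq
      exact Nat.card_congr (e.trans e').toEquiv
  rw [hiff]
  constructor
  · intro hD
    obtain ⟨H, hH, hDH⟩ := (eq_top_or_exists_le_coatom D).resolve_left hD
    obtain ⟨i, g, rfl⟩ := hrep H hH
    refine ⟨i, ?_⟩
    have hβ := hg g _ _ (hroot i)
    let b : integralClosure A N := ⟨g (θ i), f i, hmonic i, hβ⟩
    have hbfix : ∀ d : D, ρ d (ψ b) = ψ b := by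
      intro d
      obtain ⟨m, hm, hmd⟩ := hDH d.2
      rw [← hρψ d b b ?_]
      rw [← hmd]
      have := (hM i m).1 hm
      change g (θ i) = g (m (g⁻¹ (g (θ i))))
      have h7 : g⁻¹ (g (θ i)) = θ i := g.symm_apply_apply _
      rw [h7, this]
    have : IsGalois k L := { __ := hN }
    obtain ⟨x, hx⟩ := (InfiniteGalois.mem_range_algebraMap_iff_fixed (k := k) (ψ b)).2 fun σ => by
      obtain ⟨d, rfl⟩ := hρ σ
      exact hbfix d
    refine ⟨x, ?_⟩
    apply (algebraMap k L).injective
    rw [map_zero, ← eval_map_apply, hx, Polynomial.map_map, ← hψ', eval_map, ← hom_eval₂]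
    have := haev _ b hβ
    rw [aeval_def] at this
    rw [this, map_zero]
  · rintro ⟨i, x, hx⟩ hD
    apply (hmax i).1
    have hsB := splits_of_monic (f i) (hmonic i) (hfs i)
    have hmB := (hmonic i).map (algebraMap A (integralClosure A N))
    obtain ⟨m, hm⟩ := splits_iff_exists_multiset.1 hsB
    rw [hmB.leadingCoeff, C_1, one_mul] at hm
    have hx' : (((f i).map (algebraMap A (integralClosure A N))).map ψ).eval
        (algebraMap k L x) = 0 := by
      rw [Polynomial.map_map, hψ', ← Polynomial.map_map, eval_map_apply, hx, map_zero]
    rw [hm, Polynomial.map_multiset_prod, eval_multiset_prod, Multiset.prod_eq_zero_iff] at hx'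
    simp only [Multiset.map_map, Multiset.mem_map, Function.comp_apply, Polynomial.map_sub,
      Polynomial.map_X, Polynomial.map_C, eval_sub, eval_X, eval_C] at hx'
    obtain ⟨b, hbm, hbx⟩ := hx'
    have hbr : aeval b (f i) = 0 := by
      rw [← eval_map_algebraMap, hm, eval_multiset_prod, Multiset.prod_eq_zero_iff]
      simp only [Multiset.map_map, Multiset.mem_map, Function.comp_apply]
      exact ⟨b, hbm, by simp⟩
    have hbr' : aeval (b : N) (f i) = 0 := by
      have := aeval_algebraMap_apply N b (f i)
      rw [hbr, map_zero] at this
      exact this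
    have hfixb : ∀ g : Gal(N/K), g (b : N) = b := by
      intro g
      have hgD : g ∈ D := hD ▸ Subgroup.mem_top g
      let b' : integralClosure A N := ⟨g b, f i, hmonic i, hg g _ _ hbr'⟩
      have : b' = b := by
        refine hdist (f i) (hdisc i) b' b (hg g _ _ hbr') hbr' ?_
        rw [hρψ ⟨g, hgD⟩ b b' rfl, ← sub_eq_zero.1 hbx, AlgEquiv.commutes]
      exact congrArg Subtype.val this
    obtain ⟨g, hgb⟩ := hconj i b hbr'
    have hθ : θ i = b := g.injective (hgb.trans (hfixb g).symm)
    rw [eq_top_iff]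
    intro h _
    rw [hM, hθ, hfixb]

theorem stmt_aux {k : Type*} [Field k] [CharZero k]
    (P : Polynomial (Polynomial k)) (p : Polynomial (RatFunc k))
    (hp : p = P.map (algebraMap (Polynomial k) (RatFunc k)))
    (hdeg : 1 ≤ P.natDegree)
    (hsep : p.Separable)
    (hG : Nontrivial p.Gal)
    (r : ℕ)
    (M : Fin r → Subgroup p.Gal)
    (hmax : ∀ i, IsCoatom (M i))
    (hrep : ∀ H : Subgroup p.Gal,
      IsCoatom H → ∃ i, ∃ g, Subgroup.map (MulAut.conj g).toMonoidHom (M i) = H)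
    (f : Fin r → Polynomial (Polynomial k))
    (hmonic : ∀ i, (f i).Monic)
    (hirr : ∀ i, Irreducible (f i))
    (hgen : ∀ i, ∃ θ : p.SplittingField,
      Polynomial.aeval θ ((f i).map (algebraMap (Polynomial k) (RatFunc k))) = 0 ∧
        IntermediateField.fixedField (M i) = IntermediateField.adjoin (RatFunc k) {θ})
    (t : k)
    (hl : P.leadingCoeff.eval t ≠ 0)
    (hΔ : (P.map (Polynomial.evalRingHom t)).Separable)
    (hdisc : ∀ i, ((f i).map (Polynomial.evalRingHom t)).Separable) :
    IsEmpty ((P.map (Polynomial.evalRingHom t)).Gal ≃*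
        p.Gal) ↔
      ∃ i, ∃ x : k, ((f i).map (Polynomial.evalRingHom t)).eval x = 0 := by
  choose θ hθ hgen' using hgen
  have : IsGalois (RatFunc k) p.SplittingField := IsGalois.of_separable_splitting_field hsep
  have hroot : ∀ i, aeval (θ i) (f i) = 0 := fun i => by
    have := hθ i
    rwa [aeval_map_algebraMap] at this
  have hmin : ∀ i, minpoly (RatFunc k) (θ i) =
      (f i).map (algebraMap (Polynomial k) (RatFunc k)) := fun i =>
    (minpoly.eq_of_irreducible_of_monic
      (((hmonic i).irreducible_iff_irreducible_map_fraction_map).1 (hirr i)) (hθ i)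
      ((hmonic i).map _)).symm
  have hmap : ∀ q : Polynomial (Polynomial k),
      (q.map (algebraMap (Polynomial k) (RatFunc k))).map
        (algebraMap (RatFunc k) p.SplittingField) =
      q.map (algebraMap (Polynomial k) p.SplittingField) := fun q => by
    rw [Polynomial.map_map, ← IsScalarTower.algebraMap_eq]
  refine main_aux (K := RatFunc k) (N := p.SplittingField) (Polynomial.evalRingHom t)
    (fun x => ⟨C x, by simp⟩) P hdeg ?_ ?_ hl hΔ M hmax hrep f hmonic θ hroot ?_ ?_ ?_ hdisc
  · have h0 := SplittingField.splits p
    rw [← hmap]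
    convert h0
    exact hp.symm
  · intro g h
    refine Gal.ext p fun x hx => ?_
    rw [mem_rootSet] at hx
    refine h x ?_
    rw [← aeval_map_algebraMap (RatFunc k) x P]
    have h2 : P.map (algebraMap (Polynomial k) (RatFunc k)) = p := hp.symm
    exact (congrArg (aeval x) h2).trans hx.2
  · intro i
    rw [← hmap, ← hmin]
    exact Normal.splits inferInstance (θ i)
  · intro i β hβ
    have h1 : minpoly (RatFunc k) (θ i) = minpoly (RatFunc k) β := by
      rw [hmin]
      refine minpoly.eq_of_irreducible_of_monic
        (((hmonic i).irreducible_iff_irreducible_map_fraction_map).1 (hirr i)) ?_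
        ((hmonic i).map _)
      rwa [aeval_map_algebraMap]
    obtain ⟨g, hg⟩ := (Normal.minpoly_eq_iff_mem_orbit (F := RatFunc k)
      (E := p.SplittingField)).1 h1.symm
    exact ⟨g, hg⟩
  · intro i g
    have h1 : IntermediateField.fixingSubgroup (IntermediateField.fixedField (M i)) = M i :=
      IntermediateField.fixingSubgroup_fixedField (M i)
    rw [← h1, hgen', IntermediateField.mem_fixingSubgroup_iff]
    constructor
    · intro h
      exact h _ (IntermediateField.mem_adjoin_simple_self _ _)
    · intro h x hx
      induction hx using IntermediateField.adjoin_induction with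
      | mem x hx => rw [Set.mem_singleton_iff.1 hx]; exact h
      | algebraMap x => exact g.commutes x
      | add x y _ _ hx hy => rw [map_add, hx, hy]
      | inv x _ hx => rw [map_inv₀, hx]
      | mul x y _ _ hx hy => rw [map_mul, hx, hy]


/-- Theorem `main_hit_thm`(2): Let `k` be a field of characteristic `0` and
let `P ∈ k[T][X]` be separable of degree `n ≥ 1` in `X` over `k(T)`, with nontrivial
Galois group `G` over `k(T)`.  Let `M₁, …, M_r` represent all conjugacy classes of
maximal subgroups of `G`, let `F_i` be the fixed field of `M_i`, and let `f_i(T,X)` be a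
monic irreducible polynomial of `k[T][X]` such that `F_i/k(T)` is generated by a root of
`f_i`.  If `t ∈ k` satisfies `Δ(t)·ℓ(t)·∏ᵢ disc f_i(t,X) ≠ 0` (equivalently: `ℓ(t) ≠ 0`
and the specializations `P(t,X)` and `f_i(t,X)` are all separable), then the Galois group
`G_t` of `P(t,X)` over `k` is not isomorphic to `G` iff some `f_i(t,X)` has a root in
`k`. -/
theorem stmt_1 {k : Type*} [Field k] [CharZero k]
    (P : Polynomial (Polynomial k))
    (hdeg : 1 ≤ P.natDegree)
    (hsep : (P.map (algebraMap (Polynomial k) (RatFunc k))).Separable)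
    (hG : Nontrivial (P.map (algebraMap (Polynomial k) (RatFunc k))).Gal)
    (r : ℕ)
    (M : Fin r → Subgroup (P.map (algebraMap (Polynomial k) (RatFunc k))).Gal)
    (hmax : ∀ i, IsCoatom (M i))
    (hrep : ∀ H : Subgroup (P.map (algebraMap (Polynomial k) (RatFunc k))).Gal,
      IsCoatom H → ∃ i, ∃ g, Subgroup.map (MulAut.conj g).toMonoidHom (M i) = H)
    (f : Fin r → Polynomial (Polynomial k))
    (hmonic : ∀ i, (f i).Monic)
    (hirr : ∀ i, Irreducible (f i))
    (hgen : ∀ i, ∃ θ : (P.map (algebraMap (Polynomial k) (RatFunc k))).SplittingField,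
      Polynomial.aeval θ ((f i).map (algebraMap (Polynomial k) (RatFunc k))) = 0 ∧
        IntermediateField.fixedField (M i) = IntermediateField.adjoin (RatFunc k) {θ})
    (t : k)
    (hl : P.leadingCoeff.eval t ≠ 0)
    (hΔ : (P.map (Polynomial.evalRingHom t)).Separable)
    (hdisc : ∀ i, ((f i).map (Polynomial.evalRingHom t)).Separable) :
    IsEmpty ((P.map (Polynomial.evalRingHom t)).Gal ≃*
        (P.map (algebraMap (Polynomial k) (RatFunc k))).Gal) ↔
      ∃ i, ∃ x : k, ((f i).map (Polynomial.evalRingHom t)).eval x = 0 :=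
  stmt_aux P _ rfl hdeg hsep hG r M hmax hrep f hmonic hirr hgen t hl hΔ hdisc
end

section
/- Let k be a field of characteristic 0, let P ∈ k[T][X] be separable of degree n ≥ 1 in X over k(T) with discriminant Δ(T) and leading coefficient ℓ(T), let N be a splitting field of P over k(T) with Galois group G = Gal(N/k(T)), let A = k[T][ℓ(T)⁻¹], and let O_N be the integral closure of A in N. Suppose t ∈ k satisfies Δ(t)·ℓ(t) ≠ 0, let 𝔭_t be the kernel of the evaluation homomorphism A → k extending a(T) ↦ a(t), and let 𝔓 be any prime of O_N dividing 𝔭_t·O_N. Then the decomposition group G_𝔓 = {σ ∈ G : σ(𝔓) = 𝔓} is isomorphic (as a group) to the Galois group G_t of the specialized polynomial P(t,X) over k. -/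
open Polynomial
set_option maxHeartbeats 1000000
set_option synthInstance.maxHeartbeats 200000

open scoped Pointwise in
theorem core_aux {A B G k L : Type*} [CommRing A] [CommRing B] [IsDomain B] [Algebra A B]
    [Group G] [Finite G] [MulSemiringAction G B] [SMulCommClass G A B] [Algebra.IsInvariant A B G]
    (I : Ideal A) (Q : Ideal B) [Q.IsPrime] [Q.LiesOver I]
    [Field k] [Field L] [Algebra (A ⧸ I) k] [Algebra (B ⧸ Q) L] [Algebra k L]
    [Algebra (A ⧸ I) L] [IsScalarTower (A ⧸ I) (B ⧸ Q) L] [IsScalarTower (A ⧸ I) k L]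
    [IsFractionRing (A ⧸ I) k] [IsFractionRing (B ⧸ Q) L] [Normal k L]
    (p : A[X]) (u : B) (hu : u ≠ 0) (s : Multiset B)
    (hp : p.map (algebraMap A B) = C u * (s.map (fun b => X - C b)).prod)
    (hG : ∀ g : G, (∀ b ∈ s, g • b = b) → g = 1)
    (q : k[X]) (hq : p.map ((algebraMap (A ⧸ I) k).comp (Ideal.Quotient.mk I)) = q)
    (hsep : q.Separable) :
    Nonempty (MulAction.stabilizer G Q ≃* q.Gal) := by
  classical
  let π : B →+* L := (algebraMap (B ⧸ Q) L).comp (Ideal.Quotient.mk Q)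
  have hπ : q.map (algebraMap k L) = C (π u) * ((s.map π).map (fun b => X - C b)).prod := by
    have h1 : (algebraMap k L).comp ((algebraMap (A ⧸ I) k).comp (Ideal.Quotient.mk I)) =
        π.comp (algebraMap A B) := by
      ext a
      change algebraMap k L (algebraMap (A ⧸ I) k (Ideal.Quotient.mk I a)) =
        algebraMap (B ⧸ Q) L (algebraMap (A ⧸ I) (B ⧸ Q) (Ideal.Quotient.mk I a))
      rw [← IsScalarTower.algebraMap_apply, ← IsScalarTower.algebraMap_apply]
    rw [← hq, Polynomial.map_map, h1, ← Polynomial.map_map, hp, Polynomial.map_mul,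
      Polynomial.map_multiset_prod]
    simp [Multiset.map_map]
  have hq0 : q ≠ 0 := hsep.ne_zero
  have hu' : π u ≠ 0 := by
    intro h
    rw [h, C_0, zero_mul] at hπ
    exact hq0 ((Polynomial.map_eq_zero _).1 hπ)
  have hroots : (q.map (algebraMap k L)).roots = s.map π := by
    rw [hπ, roots_C_mul _ hu', roots_multiset_prod_X_sub_C]
  have hnd : (s.map π).Nodup := by
    rw [← hroots]
    exact nodup_roots hsep.map
  have hspl : Fact ((q.map (algebraMap k L)).Splits) := ⟨by
    rw [hπ]
    refine (Splits.C _).mul (Splits.multisetProd ?_)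
    intro f hf
    obtain ⟨b, -, rfl⟩ := Multiset.mem_map.1 hf
    exact Splits.X_sub_C _⟩
  let φ : MulAction.stabilizer G Q →* q.Gal :=
    (Polynomial.Gal.restrict q L).comp (IsFractionRing.stabilizerHom G I Q k L)
  have hsurj : Function.Surjective φ :=
    (Polynomial.Gal.restrict_surjective q L).comp
      (IsFractionRing.stabilizerHom_surjective G I Q k L)
  have hinj : Function.Injective φ := by
    rw [injective_iff_map_eq_one]
    intro g hg
    apply Subtype.ext
    apply hG
    intro b hb
    have hroot : ∀ c : B, c ∈ s ↔ (p.map (algebraMap A B)).eval c = 0 := by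
      intro c
      rw [hp, eval_mul, eval_C, eval_multiset_prod, mul_eq_zero, or_iff_right hu,
        Multiset.prod_eq_zero_iff]
      simp [sub_eq_zero]
    have hgb : (g : G) • b ∈ s := by
      rw [hroot] at hb ⊢
      have := congrArg (fun x => (g : G) • x) hb
      simp only [smul_zero] at this
      rw [← this, eval_map, eval_map]
      have h2 := Polynomial.hom_eval₂ p (algebraMap A B) (MulSemiringAction.toRingHom G B g) b
      simp only [MulSemiringAction.toRingHom_apply] at h2
      rw [h2]
      congr 1
      ext a
      simp
    have hmem : π b ∈ q.rootSet L := by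
      rw [mem_rootSet', ← mem_aroots', aroots, hroots]
      exact Multiset.mem_map_of_mem _ hb
    have h3 := Polynomial.Gal.restrict_smul (p := q) (E := L)
      (IsFractionRing.stabilizerHom G I Q k L g) ⟨π b, hmem⟩
    have h4 : Polynomial.Gal.restrict q L (IsFractionRing.stabilizerHom G I Q k L g) = 1 := hg
    rw [h4, one_smul] at h3
    have h5 : π b = π ((g : G) • b) := by
      refine h3.trans ?_
      exact IsFractionRing.stabilizerHom_apply_apply_mk G I Q k L g b
    exact (Multiset.inj_on_of_nodup_map hnd _ hgb _ hb h5.symm)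
  exact ⟨MulEquiv.ofBijective φ ⟨hinj, hsurj⟩⟩

open scoped Pointwise in
theorem core_aux2 {A B G k : Type*} [CommRing A] [CommRing B] [IsDomain B] [Algebra A B]
    [Group G] [Finite G] [MulSemiringAction G B] [SMulCommClass G A B] [Algebra.IsInvariant A B G]
    (Q : Ideal B) [Q.IsPrime]
    [Field k] (ev : A →+* k) (hev : Function.Surjective ev)
    (hQ : Ideal.map (algebraMap A B) (RingHom.ker ev) ≤ Q)
    (p : A[X]) (u : B) (hu : u ≠ 0) (s : Multiset B)
    (hp : p.map (algebraMap A B) = C u * (s.map (fun b => X - C b)).prod)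
    (hG : ∀ g : G, (∀ b ∈ s, g • b = b) → g = 1)
    (q : k[X]) (hq : p.map ev = q) (hsep : q.Separable) :
    Nonempty (MulAction.stabilizer G Q ≃* q.Gal) := by
  have hmax : (RingHom.ker ev).IsMaximal := RingHom.ker_isMaximal_of_surjective ev hev
  have hlo : Q.LiesOver (RingHom.ker ev) := by
    refine ⟨hmax.eq_of_le ?_ (Ideal.map_le_iff_le_comap.1 hQ)⟩
    exact (Ideal.IsPrime.under A Q).ne_top
  let : Algebra (A ⧸ RingHom.ker ev) k := (RingHom.kerLift ev).toAlgebra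
  let e := RingHom.quotientKerEquivOfSurjective hev
  have he : ∀ x, e x = algebraMap (A ⧸ RingHom.ker ev) k x := fun x => rfl
  let : Algebra k (FractionRing (B ⧸ Q)) :=
    ((algebraMap (A ⧸ RingHom.ker ev) (FractionRing (B ⧸ Q))).comp
      (e.symm : k →+* A ⧸ RingHom.ker ev)).toAlgebra
  have : IsScalarTower (A ⧸ RingHom.ker ev) k (FractionRing (B ⧸ Q)) := by
    refine IsScalarTower.of_algebraMap_eq fun x => ?_
    rw [← he]
    change _ = algebraMap (A ⧸ RingHom.ker ev) (FractionRing (B ⧸ Q)) (e.symm (e x))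
    rw [e.symm_apply_apply]
  have : FaithfulSMul (A ⧸ RingHom.ker ev) k := by
    rw [faithfulSMul_iff_algebraMap_injective]
    exact RingHom.kerLift_injective ev
  have : IsFractionRing (A ⧸ RingHom.ker ev) k := by
    refine IsFractionRing.of_field _ _ fun z => ?_
    obtain ⟨a, rfl⟩ := e.surjective z
    exact ⟨a, 1, by simp [he]⟩
  have : Normal k (FractionRing (B ⧸ Q)) :=
    Ideal.IsFractionRing.normal G (RingHom.ker ev) Q k (FractionRing (B ⧸ Q))
  refine core_aux (L := FractionRing (B ⧸ Q)) (RingHom.ker ev) Q p u hu s hp hG q ?_ hsep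
  rw [← hq]
  rfl

open scoped Pointwise in
theorem core_aux3 {A F N k : Type*} [CommRing A] [IsIntegrallyClosed A] [Field F] [Field N]
    [Algebra A F] [IsFractionRing A F] [Algebra F N] [Algebra A N] [IsScalarTower A F N]
    [FiniteDimensional F N] [IsGalois F N]
    (Q : Ideal (integralClosure A N)) [Q.IsPrime]
    [Field k] (ev : A →+* k) (hev : Function.Surjective ev)
    (hQ : Ideal.map (algebraMap A (integralClosure A N)) (RingHom.ker ev) ≤ Q)
    (p : A[X]) (hlc : IsUnit p.leadingCoeff)
    (hspl : (p.map (algebraMap A N)).Splits)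
    (hadj : Algebra.adjoin F (p.rootSet N) = ⊤)
    (q : k[X]) (hq : p.map ev = q) (hsep : q.Separable) :
    ∃ H : Subgroup (N ≃ₐ[F] N),
      (H : Set (N ≃ₐ[F] N)) = {σ : N ≃ₐ[F] N | ⇑σ '' (Subtype.val '' (Q : Set (integralClosure A N))) =
          Subtype.val '' (Q : Set (integralClosure A N))} ∧ Nonempty (H ≃* q.Gal) := by
  classical
  have : SMulCommClass (N ≃ₐ[F] N) A N := ⟨fun g a x => by
    rw [← algebraMap_smul F a x, ← algebraMap_smul F a (g • x), smul_comm]⟩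
  have : Algebra.IsInvariant A (integralClosure A N) (N ≃ₐ[F] N) := ⟨fun b hb => by
    have h1 : (b : N) ∈ Set.range (algebraMap F N) := by
      rw [IsGalois.mem_range_algebraMap_iff_fixed]
      intro g
      exact congrArg Subtype.val (hb g)
    obtain ⟨x, hx⟩ := h1
    have h2 : IsIntegral A x := by
      rw [← isIntegral_algebraMap_iff (algebraMap F N).injective, hx]
      exact b.2
    obtain ⟨a, ha⟩ := IsIntegrallyClosed.isIntegral_iff.1 h2
    refine ⟨a, Subtype.ext ?_⟩
    change algebraMap A N a = b
    rw [IsScalarTower.algebraMap_apply A F N, ha, hx]⟩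
  have hinjB : Function.Injective (algebraMap (integralClosure A N) N) := Subtype.val_injective
  have hinjA : Function.Injective (algebraMap A N) := by
    rw [IsScalarTower.algebraMap_eq A F N]
    exact (algebraMap F N).injective.comp (IsFractionRing.injective A F)
  have hint : ∀ x ∈ (p.map (algebraMap A N)).roots, x ∈ integralClosure A N := by
    intro x hx
    obtain ⟨u, hu⟩ := hlc
    refine ⟨C (↑u⁻¹ : A) * p, ?_, ?_⟩
    · apply monic_C_mul_of_mul_leadingCoeff_eq_one
      rw [← hu, Units.inv_mul]
    · rw [eval₂_mul, ← eval_map (p := p), (mem_roots'.1 hx).2, mul_zero]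
  let s : Multiset (integralClosure A N) :=
    (p.map (algebraMap A N)).roots.attach.map (fun x => ⟨x.1, hint x.1 x.2⟩)
  have hs : s.map (algebraMap (integralClosure A N) N) = (p.map (algebraMap A N)).roots := by
    simp only [s, Multiset.map_map]
    exact Multiset.attach_map_val _
  have key := core_aux2 (G := N ≃ₐ[F] N) Q ev hev hQ p
    (algebraMap A (integralClosure A N) p.leadingCoeff) ?_ s ?_ ?_ q hq hsep
  · obtain ⟨f⟩ := key
    refine ⟨MulAction.stabilizer (N ≃ₐ[F] N) Q, ?_, ⟨f⟩⟩
    ext σ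
    have h1 : ⇑σ '' (Subtype.val '' (Q : Set (integralClosure A N))) =
        Subtype.val '' ((σ • Q : Ideal (integralClosure A N)) : Set (integralClosure A N)) := by
      ext x
      constructor
      · rintro ⟨_, ⟨b, hb, rfl⟩, rfl⟩
        exact ⟨σ • b, Ideal.smul_mem_pointwise_smul σ b Q hb, rfl⟩
      · rintro ⟨b, hb, rfl⟩
        refine ⟨_, ⟨σ⁻¹ • b, Ideal.mem_pointwise_smul_iff_inv_smul_mem.1 hb, rfl⟩, ?_⟩
        change ((σ • (σ⁻¹ • b) : integralClosure A N) : N) = b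
        rw [smul_inv_smul]
    rw [SetLike.mem_coe, MulAction.mem_stabilizer_iff, Set.mem_ofPred_eq, h1,
      Subtype.val_injective.image_injective.eq_iff, SetLike.coe_set_eq]
  · exact ((hlc.map _).ne_zero)
  · apply Polynomial.map_injective _ hinjB
    rw [Polynomial.map_map, ← IsScalarTower.algebraMap_eq, Polynomial.map_mul,
      Polynomial.map_multiset_prod, Multiset.map_map]
    conv_lhs => rw [hspl.eq_prod_roots, leadingCoeff_map_of_injective hinjA, ← hs]
    simp only [Multiset.map_map, map_C, ← IsScalarTower.algebraMap_apply, Function.comp_def,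
      Polynomial.map_sub, map_X]
  · intro g hg
    have : (g : N →ₐ[F] N) = AlgHom.id F N := by
      refine AlgHom.ext_of_adjoin_eq_top hadj ?_
      intro x hx
      have hx' : x ∈ (p.map (algebraMap A N)).roots := by
        rw [rootSet, Finset.mem_coe, Multiset.mem_toFinset] at hx
        exact hx
      rw [← hs] at hx'
      obtain ⟨b, hb, rfl⟩ := Multiset.mem_map.1 hx'
      exact congrArg Subtype.val (hg b hb)
    ext x
    exact DFunLike.congr_fun this x

theorem core_aux4 {k : Type*} [Field k] [CharZero k]
    (P : Polynomial (Polynomial k))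
    (hsep : (P.map (algebraMap (Polynomial k) (RatFunc k))).Separable)
    (N : Type*) [Field N] [Algebra (RatFunc k) N]
    [(P.map (algebraMap (Polynomial k) (RatFunc k))).IsSplittingField (RatFunc k) N]
    (A : Type*) [CommRing A] [Algebra (Polynomial k) A]
    [IsLocalization.Away P.leadingCoeff A]
    [Algebra A N]
    (hAN : (algebraMap A
          N).comp
        (algebraMap (Polynomial k) A) =
      (algebraMap (RatFunc k)
          N).comp
        (algebraMap (Polynomial k) (RatFunc k)))
    (t : k)
    (hl : P.leadingCoeff.eval t ≠ 0)
    (hΔ : (P.map (Polynomial.evalRingHom t)).Separable)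
    (ev : A →+* k)
    (hev : ev.comp (algebraMap (Polynomial k) A) = Polynomial.evalRingHom t)
    (𝔓 : Ideal (integralClosure A
      N))
    (h𝔓 : 𝔓.IsMaximal)
    (h𝔓dvd : Ideal.map (algebraMap A (integralClosure A
        N))
      (RingHom.ker ev) ≤ 𝔓) :
    ∃ H : Subgroup (N ≃ₐ[RatFunc k] N),
      (H : Set (N ≃ₐ[RatFunc k] N)) =
        {σ : N ≃ₐ[RatFunc k]
            N | ⇑σ '' (Subtype.val '' (𝔓 : Set (integralClosure A
            N))) =
          Subtype.val '' (𝔓 : Set (integralClosure A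
            N))} ∧
      Nonempty (H ≃* (P.map (Polynomial.evalRingHom t)).Gal) := by
  classical
  have hP0 : P.leadingCoeff ≠ 0 := by
    intro h
    rw [h] at hl
    simp at hl
  have hM : Submonoid.powers P.leadingCoeff ≤ nonZeroDivisors (Polynomial k) :=
    powers_le_nonZeroDivisors_of_noZeroDivisors hP0
  have hunit : IsUnit (algebraMap (Polynomial k) (RatFunc k) P.leadingCoeff) := by
    rw [isUnit_iff_ne_zero]
    exact (map_ne_zero_iff _ (IsFractionRing.injective (Polynomial k) (RatFunc k))).2 hP0
  let alg : Algebra A (RatFunc k) := (IsLocalization.Away.lift P.leadingCoeff hunit).toAlgebra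
  have tow : IsScalarTower (Polynomial k) A (RatFunc k) :=
    IsScalarTower.of_algebraMap_eq fun x => (IsLocalization.Away.lift_eq _ hunit x).symm
  have tow2 : IsScalarTower A (RatFunc k)
      N := by
    refine IsScalarTower.of_algebraMap_eq' ?_
    apply IsLocalization.ringHom_ext (Submonoid.powers P.leadingCoeff)
    rw [hAN, RingHom.comp_assoc, ← IsScalarTower.algebraMap_eq (Polynomial k) A (RatFunc k)]
  have hdom : IsDomain A := IsLocalization.isDomain_of_le_nonZeroDivisors A hM
  have hic : IsIntegrallyClosed A :=
    isIntegrallyClosed_of_isLocalization A (Submonoid.powers P.leadingCoeff) hM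
  have hfr : IsFractionRing A (RatFunc k) :=
    IsFractionRing.isFractionRing_of_isDomain_of_isLocalization
      (Submonoid.powers P.leadingCoeff) A (RatFunc k)
  have hfin : FiniteDimensional (RatFunc k) N :=
    IsSplittingField.finiteDimensional N (P.map (algebraMap (Polynomial k) (RatFunc k)))
  have hgal : IsGalois (RatFunc k)
      N :=
    IsGalois.of_separable_splitting_field hsep
  have hinj : Function.Injective (algebraMap (Polynomial k) A) := IsLocalization.injective A hM
  have hprime : 𝔓.IsPrime := h𝔓.isPrime
  have hmm : (P.map (algebraMap (Polynomial k) A)).map (algebraMap A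
      N) =
      (P.map (algebraMap (Polynomial k) (RatFunc k))).map (algebraMap (RatFunc k)
      N) := by
    rw [Polynomial.map_map, hAN, ← Polynomial.map_map]
  refine core_aux3 (F := RatFunc k) 𝔓 ev ?_ h𝔓dvd (P.map (algebraMap (Polynomial k) A)) ?_ ?_ ?_
    (P.map (Polynomial.evalRingHom t)) ?_ hΔ
  · intro c
    refine ⟨algebraMap (Polynomial k) A (C c), ?_⟩
    have := RingHom.congr_fun hev (C c)
    simpa using this
  · rw [leadingCoeff_map_of_injective hinj]
    exact IsLocalization.Away.algebraMap_isUnit _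
  · rw [hmm]
    exact IsSplittingField.splits N _
  · have h := IsSplittingField.adjoin_rootSet N (P.map (algebraMap (Polynomial k) (RatFunc k)))
    rw [rootSet, aroots, hmm]
    exact h
  · rw [Polynomial.map_map, hev]

/-- Proposition `decomposition_group_prop`: With `k` of characteristic `0`,
`P ∈ k[T][X]` separable of degree `n ≥ 1` in `X` over `k(T)` with discriminant `Δ` and
leading coefficient `ℓ`, `N` the splitting field of `P` over `k(T)` with Galois group
`G = Gal(N/k(T))`, `A = k[T][ℓ⁻¹]`, and `O_N = integralClosure A N`: if `t ∈ k`
satisfies `Δ(t)·ℓ(t) ≠ 0` (equivalently `ℓ(t) ≠ 0` and `P(t,X)` separable), `𝔭_t` is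
the kernel of the evaluation map `ev : A → k` extending `a(T) ↦ a(t)`, and `𝔓` is any
prime of `O_N` dividing `𝔭_t·O_N`, then the decomposition group
`G_𝔓 = {σ ∈ G | σ(𝔓) = 𝔓}` is isomorphic as a group to the Galois group `G_t` of the
specialization `P(t,X)` over `k`. -/
theorem stmt_5 {k : Type*} [Field k] [CharZero k]
    (P : Polynomial (Polynomial k))
    (hdeg : 1 ≤ P.natDegree)
    (hsep : (P.map (algebraMap (Polynomial k) (RatFunc k))).Separable)
    (A : Type*) [CommRing A] [Algebra (Polynomial k) A]
    [IsLocalization.Away P.leadingCoeff A]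
    [Algebra A (P.map (algebraMap (Polynomial k) (RatFunc k))).SplittingField]
    (hAN : (algebraMap A
          (P.map (algebraMap (Polynomial k) (RatFunc k))).SplittingField).comp
        (algebraMap (Polynomial k) A) =
      (algebraMap (RatFunc k)
          (P.map (algebraMap (Polynomial k) (RatFunc k))).SplittingField).comp
        (algebraMap (Polynomial k) (RatFunc k)))
    (t : k)
    (hl : P.leadingCoeff.eval t ≠ 0)
    (hΔ : (P.map (Polynomial.evalRingHom t)).Separable)
    (ev : A →+* k)
    (hev : ev.comp (algebraMap (Polynomial k) A) = Polynomial.evalRingHom t)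
    (𝔓 : Ideal (integralClosure A
      (P.map (algebraMap (Polynomial k) (RatFunc k))).SplittingField))
    (h𝔓 : 𝔓.IsMaximal)
    (h𝔓dvd : Ideal.map (algebraMap A (integralClosure A
        (P.map (algebraMap (Polynomial k) (RatFunc k))).SplittingField))
      (RingHom.ker ev) ≤ 𝔓) :
    ∃ H : Subgroup (P.map (algebraMap (Polynomial k) (RatFunc k))).Gal,
      (H : Set (P.map (algebraMap (Polynomial k) (RatFunc k))).Gal) =
        {σ : (P.map (algebraMap (Polynomial k) (RatFunc k))).SplittingField ≃ₐ[RatFunc k]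
            (P.map (algebraMap (Polynomial k) (RatFunc k))).SplittingField | ⇑σ '' (Subtype.val '' (𝔓 : Set (integralClosure A
            (P.map (algebraMap (Polynomial k) (RatFunc k))).SplittingField))) =
          Subtype.val '' (𝔓 : Set (integralClosure A
            (P.map (algebraMap (Polynomial k) (RatFunc k))).SplittingField))} ∧
      Nonempty (H ≃* (P.map (Polynomial.evalRingHom t)).Gal) := by
  exact core_aux4 P hsep _ A hAN t hl hΔ ev hev 𝔓 h𝔓 h𝔓dvd
end

section
/- Let F₁(T,X) = X⁴ + 4X³ + 81T² + 27 and let t be a nonzero rational number. Then the polynomial F₁(t,X) = X⁴ + 4X³ + 81t² + 27 has no rational root. -/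
/-- For every nonzero rational `t`, the polynomial
`F₁(t,X) = X⁴ + 4X³ + 81t² + 27 ∈ ℚ[X]` has no rational root. -/
theorem stmt_7 (t : ℚ) (ht : t ≠ 0) :
    ¬ ∃ x : ℚ, Polynomial.eval x
      (Polynomial.X ^ 4 + 4 * Polynomial.X ^ 3 +
        Polynomial.C (81 * t ^ 2 + 27) : Polynomial ℚ) = 0 := by
  rintro ⟨x, hx⟩
  simp only [Polynomial.eval_add, Polynomial.eval_mul, Polynomial.eval_pow, Polynomial.eval_X,
    Polynomial.eval_C, Polynomial.eval_ofNat] at hx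
  have h1 : 0 < t ^ 2 := by positivity
  have h2 : 0 ≤ (x + 3) ^ 2 * ((x - 1) ^ 2 + 2) := by positivity
  have h3 : (x + 3) ^ 2 * ((x - 1) ^ 2 + 2) = x ^ 4 + 4 * x ^ 3 + 27 := by ring
  linarith
end

section
/- Let F₂(T,X) = X³ + 48X² + (336 − 1296T²)X − 10368T² + 640 and let t be a nonzero rational number. Then the polynomial F₂(t,X) has a rational root if and only if t = (v³ − 9v)/(9(1 − v²)) for some rational number v (necessarily with v² ≠ 1). -/
/-- For a nonzero rational `t`, the polynomial
`F₂(t,X) = X³ + 48X² + (336 − 1296t²)X − 10368t² + 640` has a rational root if and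
only if `t = (v³ − 9v)/(9(1 − v²))` for some rational `v` (necessarily with `v² ≠ 1`). -/
theorem stmt_9 (t : ℚ) (ht : t ≠ 0) :
    (∃ x : ℚ, x ^ 3 + 48 * x ^ 2 + (336 - 1296 * t ^ 2) * x - 10368 * t ^ 2 + 640 = 0) ↔
      ∃ v : ℚ, v ^ 2 ≠ 1 ∧ t = (v ^ 3 - 9 * v) / (9 * (1 - v ^ 2)) := by
  constructor
  · rintro ⟨x, hx⟩
    have h4 : x + 4 ≠ 0 := by
      intro h
      have hx4 : x = -4 := by linarith
      subst hx4
      apply ht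
      have : t ^ 2 = 0 := by linarith
      exact pow_eq_zero_iff (two_ne_zero) |>.1 this
    obtain ⟨v, hv⟩ : ∃ v : ℚ, v * (x + 4) = 36 * t :=
      ⟨36 * t / (x + 4), div_mul_cancel₀ _ h4⟩
    have key : v ^ 2 * (x + 8) = x + 40 := by
      have h2 : (x + 4) ^ 2 ≠ 0 := pow_ne_zero 2 h4
      apply mul_left_cancel₀ h2
      linear_combination (x + 8) * (v * (x + 4) + 36 * t) * hv - hx
    have hv1 : v ^ 2 ≠ 1 := by
      intro h
      rw [h] at key
      linarith
    refine ⟨v, hv1, ?_⟩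
    have h1 : 1 - v ^ 2 ≠ 0 := fun h => hv1 (by linarith)
    rw [eq_div_iff (by positivity)]
    linear_combination (-(1 - v ^ 2) / 4) * hv - v / 4 * key
  · rintro ⟨v, hv1, rfl⟩
    have h1 : 1 - v ^ 2 ≠ 0 := fun h => hv1 (by linarith)
    refine ⟨(8 * v ^ 2 - 40) / (1 - v ^ 2), ?_⟩
    field_simp
    ring
end

section
/- Let P(T,X) = 3X⁴ − 4X³ + 1 + 3T². For every rational number t, let G_t denote the Galois group over ℚ of the specialized polynomial P(t,X) = 3X⁴ − 4X³ + 1 + 3t², i.e., the Galois group of a splitting field of this polynomial over ℚ. Then G_t is not isomorphic to the alternating group A₄ if and only if t = (v³ − 9v)/(9(1 − v²)) for some rational number v with v² ≠ 1. -/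
open Polynomial

/-- Rational roots of the cubic resolvent give the parametrization. -/
lemma aux_param (t y : ℚ) (h : 9 * y ^ 3 = (1 + 3 * t ^ 2) / 3 * (36 * y + 16)) :
    ∃ v : ℚ, v ^ 2 ≠ 1 ∧ t = (v ^ 3 - 9 * v) / (9 * (1 - v ^ 2)) := by
  by_cases h0 : t = 0
  · exact ⟨0, by norm_num, by simp [h0]⟩
  have h2 : 3 * y + 2 ≠ 0 := by
    intro hy
    have : y = -2 / 3 := by linarith
    subst this
    apply h0
    have : t ^ 2 = 0 := by nlinarith
    exact pow_eq_zero_iff (two_ne_zero) |>.1 this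
  have hk : 12 * t ^ 2 * (9 * y + 4) = (3 * y + 2) ^ 2 * (3 * y - 4) := by linarith
  -- v = - 6 t / (3 y + 2)
  obtain ⟨v, hv⟩ : ∃ v, v = - 6 * t / (3 * y + 2) := ⟨_, rfl⟩
  have hv' : v * (3 * y + 2) = - 6 * t := by rw [hv]; field_simp
  have h3 : v ^ 2 * (9 * y + 4) = 3 * (3 * y - 4) := by
    have : (3 * y + 2) ^ 2 * (v ^ 2 * (9 * y + 4)) = (3 * y + 2) ^ 2 * (3 * (3 * y - 4)) := by
      linear_combination 3 * hk + (9 * y + 4) * (v * (3 * y + 2) - 6 * t) * hv'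
    exact mul_left_cancel₀ (pow_ne_zero 2 h2) this
  have h1 : v ^ 2 ≠ 1 := by
    intro h1
    rw [h1] at h3
    linarith
  refine ⟨v, h1, ?_⟩
  have h1' : 1 - v ^ 2 ≠ 0 := fun h => h1 (by linarith)
  rw [eq_div_iff (by simpa using h1')]
  linear_combination (9 * (1 - v ^ 2) / 6) * hv' + (v / 2) * h3

lemma aux_param' (t v : ℚ) (h1 : v ^ 2 ≠ 1) (ht : t = (v ^ 3 - 9 * v) / (9 * (1 - v ^ 2))) :
    ∃ y : ℚ, 9 * y ^ 3 = (1 + 3 * t ^ 2) / 3 * (36 * y + 16) := by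
  have h1' : 1 - v ^ 2 ≠ 0 := fun h => h1 (by linarith)
  refine ⟨4 * (3 + v ^ 2) / (9 * (1 - v ^ 2)), ?_⟩
  subst ht
  field_simp
  ring

/-- An element of order three is incompatible with a rational root of the resolvent. -/
lemma aux_no_order_three {K : Type*} [Field K] [Algebra ℚ K] (t y : ℚ)
    (hy : 9 * y ^ 3 = (1 + 3 * t ^ 2) / 3 * (36 * y + 16))
    (σ : K ≃ₐ[ℚ] K) (h3 : σ ^ 3 = 1) (x : K)
    (hx : 3 * x ^ 4 - 4 * x ^ 3 + 1 + 3 * (t : K) ^ 2 = 0) : σ x = x := by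
  have : CharZero K := algebraRat.charZero K
  by_contra hne
  obtain ⟨b, hb⟩ : ∃ b, b = σ x := ⟨_, rfl⟩
  obtain ⟨c, hc⟩ : ∃ c, c = σ b := ⟨_, rfl⟩
  have hca : σ c = x := by
    have := congrArg (fun f : K ≃ₐ[ℚ] K => f x) h3
    rw [hc, hb]
    simpa [pow_succ] using this
  have hσt : ∀ q : ℚ, σ (q : K) = q := fun q => map_ratCast σ q
  have hxb : x ≠ b := fun h => hne (hb ▸ h.symm)
  have hbc : b ≠ c := fun h => hxb (σ.injective (by rw [← hb, ← hc]; exact h))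
  have hcx : c ≠ x := fun h => hbc (σ.injective (by rw [← hc, hca]; exact h))
  have hxb' : x - b ≠ 0 := sub_ne_zero.2 hxb
  have hbc' : b - c ≠ 0 := sub_ne_zero.2 hbc
  have hcx' : c - x ≠ 0 := sub_ne_zero.2 hcx
  have hB : 3 * b ^ 4 - 4 * b ^ 3 + 1 + 3 * (t : K) ^ 2 = 0 := by
    have := congrArg σ hx
    simpa [hσt, ← hb, map_ofNat] using this
  have hC : 3 * c ^ 4 - 4 * c ^ 3 + 1 + 3 * (t : K) ^ 2 = 0 := by
    have := congrArg σ hB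
    simpa [hσt, ← hc, map_ofNat] using this
  have d1 : 3 * (x ^ 3 + x ^ 2 * b + x * b ^ 2 + b ^ 3) - 4 * (x ^ 2 + x * b + b ^ 2) = 0 := by
    apply mul_left_cancel₀ hxb'
    linear_combination hx - hB
  have d2 : 3 * (b ^ 3 + b ^ 2 * c + b * c ^ 2 + c ^ 3) - 4 * (b ^ 2 + b * c + c ^ 2) = 0 := by
    apply mul_left_cancel₀ hbc'
    linear_combination hB - hC
  have d3 : 3 * (x ^ 2 + b ^ 2 + c ^ 2 + x * b + b * c + c * x) - 4 * (x + b + c) = 0 := by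
    apply mul_left_cancel₀ hcx'
    linear_combination d2 - d1
  obtain ⟨w, hw⟩ : ∃ w, w = 4 / 3 - x - b - c := ⟨_, rfl⟩
  have hσw : σ w = w := by
    rw [hw]; simp only [map_sub, ← hb, ← hc, hca, map_div₀, map_ofNat]; ring
  have e2 : x * b + x * c + x * w + b * c + b * w + c * w = 0 := by
    rw [hw]; linear_combination (-1 / 3) * d3
  have e3 : x * b * c + x * b * w + x * c * w + b * c * w = 0 := by
    rw [hw]; linear_combination (1 / 3) * d1 - (1 / 3) * (x + b) * d3
  have e4 : x * b * c * w = (1 + 3 * (t : K) ^ 2) / 3 := by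
    rw [hw]; linear_combination (-1 / 3) * hx + (1 / 3) * x * d1 - (1 / 3) * (x * b) * d3
  have e1 : x + b + c + w = 4 / 3 := by rw [hw]; ring
  have hyK : 9 * (y : K) ^ 3 = (1 + 3 * (t : K) ^ 2) / 3 * (36 * y + 16) := by exact_mod_cast hy
  have key : ((y : K) - (x * b + c * w)) * (y - (x * c + b * w)) * (y - (x * w + b * c)) = 0 := by
    have : ((y : K) - (x * b + c * w)) * (y - (x * c + b * w)) * (y - (x * w + b * c)) =
      y ^ 3 - (x * b + x * c + x * w + b * c + b * w + c * w) * y ^ 2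
        + ((x + b + c + w) * (x * b * c + x * b * w + x * c * w + b * c * w)
          - 4 * (x * b * c * w)) * y
        - ((x * b * c + x * b * w + x * c * w + b * c * w) ^ 2
          + (x + b + c + w) ^ 2 * (x * b * c * w)
          - 4 * (x * b + x * c + x * w + b * c + b * w + c * w) * (x * b * c * w)) := by ring
    rw [this, e1, e2, e3, e4]
    linear_combination (1 / 9) * hyK
  have fin : (y : K) = 0 → False := by
    intro h
    have h' : y = 0 := by exact_mod_cast h
    subst h'
    nlinarith [sq_nonneg t]
  have step : ∀ a b' c' d : K, (y : K) = a * b' + c' * d →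
      (y : K) = σ a * σ b' + σ c' * σ d := by
    intro a b' c' d h
    have := congrArg σ h
    simpa [hσt] using this
  have all : ∀ a b' c' : K, σ a = b' → σ b' = c' → σ c' = a → a * b' + a * c' + a * w + b' * c' + b' * w + c' * w = 0 →
      (y : K) = a * b' + c' * w → False := by
    intro a b' c' ha hb' hc' hs h
    have s1 := step _ _ _ _ h
    rw [ha, hb', hc', hσw] at s1
    have s2 := step _ _ _ _ s1
    rw [ha, hb', hc', hσw] at s2
    apply fin
    linear_combination (1 / 3) * (h + s1 + s2 + hs)
  rcases mul_eq_zero.1 key with h | h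
  · rcases mul_eq_zero.1 h with h | h
    · exact all x b c hb.symm hc.symm hca e2 (sub_eq_zero.1 h)
    · exact all c x b hca hb.symm hc.symm (by linear_combination e2) (by linear_combination h)
  · exact all b c x hc.symm hca hb.symm (by linear_combination e2) (by linear_combination h)

lemma aux_A4_card : Nat.card (alternatingGroup (Fin 4)) = 12 := by
  rw [nat_card_alternatingGroup]; simp [Nat.factorial]

lemma aux_A4_top (H : Subgroup (alternatingGroup (Fin 4))) (h : 6 ∣ Nat.card H) : H = ⊤ := by
  have h1 := H.card_mul_index
  rw [aux_A4_card] at h1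
  obtain ⟨k, hk⟩ := h
  rw [hk] at h1
  have h2 : k * H.index = 2 := by nlinarith
  have h3 : H.index ∣ 2 := ⟨k, by rw [← h2, mul_comm]⟩
  rcases (Nat.dvd_prime Nat.prime_two).1 h3 with h4 | h4
  · exact Subgroup.index_eq_one.1 h4
  · rw [eq_top_iff, ← alternatingGroup.closure_isThreeCycles_eq_top, Subgroup.closure_le]
    intro g hg
    have hg3 : g ^ 3 = 1 := by
      have := Equiv.Perm.IsThreeCycle.orderOf hg
      apply Subtype.ext
      have h5 := pow_orderOf_eq_one (g : Equiv.Perm (Fin 4))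
      rw [this] at h5
      simpa using h5
    have : g = (g ^ 2) ^ 2 := by
      rw [← pow_mul]
      calc g = g ^ 3 * g := by rw [hg3, one_mul]
        _ = _ := (pow_succ g 3).symm
    rw [this]
    exact Subgroup.sq_mem_of_index_two h4 _

lemma aux_vieta {K : Type*} [Field K] [CharZero K] (t a b c d : K)
    (hr : ∀ x : K, 3 * x ^ 4 - 4 * x ^ 3 + 1 + 3 * t ^ 2 =
      3 * ((x - a) * (x - b) * (x - c) * (x - d))) :
    a + b + c + d = 4 / 3 ∧ a * b + a * c + a * d + b * c + b * d + c * d = 0 ∧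
    a * b * c + a * b * d + a * c * d + b * c * d = 0 ∧
    a * b * c * d = (1 + 3 * t ^ 2) / 3 := by
  have h0 := hr 0
  have h1 := hr 1
  have h2 := hr (-1)
  have h3 := hr 2
  have e1 : a + b + c + d = 4 / 3 := by
    linear_combination (1 / 18) * (h3 - h0 - 2 * (h1 + h2 - 2 * h0) - (h1 - h2))
  refine ⟨e1, ?_, ?_, ?_⟩
  · linear_combination (-1 / 6) * (h1 + h2 - 2 * h0)
  · linear_combination (1 / 6) * (h1 - h2) - e1
  · linear_combination (-1 / 3) * h0

lemma aux_disc {K : Type*} [Field K] [CharZero K] (t a b c d : K)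
    (hr : ∀ x : K, 3 * x ^ 4 - 4 * x ^ 3 + 1 + 3 * t ^ 2 =
      3 * ((x - a) * (x - b) * (x - c) * (x - d))) :
    ((b - a) * (c - a) * (d - a) * ((c - b) * (d - b)) * (d - c)) ^ 2
      = (16 * ((1 + 3 * t ^ 2) / 3) * t) ^ 2 := by
  obtain ⟨e1, e2, e3, e4⟩ := aux_vieta t a b c d hr
  have gen : ∀ B C' D E : K, B = - (a + b + c + d) →
      C' = a * b + a * c + a * d + b * c + b * d + c * d →
      D = - (a * b * c + a * b * d + a * c * d + b * c * d) → E = a * b * c * d →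
      ((b - a) * (c - a) * (d - a) * ((c - b) * (d - b)) * (d - c)) ^ 2 =
      256 * E ^ 3 - 192 * B * D * E ^ 2 - 128 * C' ^ 2 * E ^ 2 + 144 * C' * D ^ 2 * E - 27 * D ^ 4
      + 144 * B ^ 2 * C' * E ^ 2 - 6 * B ^ 2 * D ^ 2 * E - 80 * B * C' ^ 2 * D * E
      + 18 * B * C' * D ^ 3 + 16 * C' ^ 4 * E - 4 * C' ^ 3 * D ^ 2 - 27 * B ^ 4 * E ^ 2
      + 18 * B ^ 3 * C' * D * E - 4 * B ^ 3 * D ^ 3 - 4 * B ^ 2 * C' ^ 3 * E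
      + B ^ 2 * C' ^ 2 * D ^ 2 := by
    intro B C' D E h1 h2 h3 h4
    subst h1 h2 h3 h4
    ring
  rw [gen _ _ _ _ rfl rfl rfl rfl, e1, e2, e3, e4]
  ring

/-- The main group-theoretic construction. -/
lemma aux_iso {K : Type*} [Field K] [Algebra ℚ K] [FiniteDimensional ℚ K] (t : ℚ) (ht : t ≠ 0)
    (r : Fin 4 → K)
    (hr : ∀ x : K, 3 * x ^ 4 - 4 * x ^ 3 + 1 + 3 * (t : K) ^ 2 =
      3 * ((x - r 0) * (x - r 1) * (x - r 2) * (x - r 3)))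
    (hext : ∀ σ : K ≃ₐ[ℚ] K, (∀ i, σ (r i) = r i) → σ = 1)
    (hcard : 6 ∣ Nat.card (K ≃ₐ[ℚ] K)) :
    Nonempty ((K ≃ₐ[ℚ] K) ≃* alternatingGroup (Fin 4)) := by
  have : CharZero K := algebraRat.charZero K
  have hdet : (Matrix.vandermonde r).det =
      (r 1 - r 0) * (r 2 - r 0) * (r 3 - r 0) * ((r 2 - r 1) * (r 3 - r 1)) * (r 3 - r 2) := by
    rw [Matrix.det_vandermonde]
    have i0 : Finset.Ioi (0 : Fin 4) = {1, 2, 3} := by decide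
    have i1 : Finset.Ioi (1 : Fin 4) = {2, 3} := by decide
    have i2 : Finset.Ioi (2 : Fin 4) = {3} := by decide
    have i3 : Finset.Ioi (3 : Fin 4) = ∅ := by decide
    rw [Fin.prod_univ_four, i0, i1, i2, i3, Finset.prod_insert (by decide),
      Finset.prod_insert (by decide), Finset.prod_insert (by decide)]
    simp only [Finset.prod_singleton, Finset.prod_empty]
    ring
  have hsq := aux_disc (t : K) _ _ _ _ hr
  rw [← hdet] at hsq
  have hq : ∃ q : ℚ, q ≠ 0 ∧ (Matrix.vandermonde r).det = q := by
    have hne : 16 * ((1 + 3 * t ^ 2) / 3) * t ≠ 0 := by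
      have : 0 < 1 + 3 * t ^ 2 := by positivity
      have := this.ne'
      simp [ht, this]
    rcases sq_eq_sq_iff_eq_or_eq_neg.1 hsq with h | h
    · exact ⟨16 * ((1 + 3 * t ^ 2) / 3) * t, hne, by rw [h]; push_cast; ring⟩
    · exact ⟨-(16 * ((1 + 3 * t ^ 2) / 3) * t), neg_ne_zero.2 hne, by rw [h]; push_cast; ring⟩
  obtain ⟨q, hq0, hq⟩ := hq
  have hq0' : (q : K) ≠ 0 := by exact_mod_cast hq0
  have hinj : Function.Injective r := by
    rw [← Matrix.det_vandermonde_ne_zero_iff, hq]; exact hq0'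
  have hroot : ∀ x : K, 3 * x ^ 4 - 4 * x ^ 3 + 1 + 3 * (t : K) ^ 2 = 0 ↔ ∃ i, x = r i := by
    intro x
    rw [hr x]
    simp [Fin.exists_fin_succ, sub_eq_zero, or_assoc]
  have hex : ∀ (σ : K ≃ₐ[ℚ] K) (i : Fin 4), ∃ j, σ (r i) = r j := by
    intro σ i
    rw [← hroot]
    have := congrArg σ ((hroot (r i)).2 ⟨i, rfl⟩)
    simpa [map_ofNat] using this
  choose f hf using hex
  let φ₀ : (K ≃ₐ[ℚ] K) →* Function.End (Fin 4) :=
    { toFun := f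
      map_one' := by
        funext i
        apply hinj
        rw [← hf]; rfl
      map_mul' := by
        intro σ τ
        funext i
        apply hinj
        rw [← hf]
        change σ (τ (r i)) = r (f σ (f τ i))
        rw [hf, hf] }
  let φ : (K ≃ₐ[ℚ] K) →* Equiv.Perm (Fin 4) := φ₀.toHomPerm
  have hφ : ∀ σ i, σ (r i) = r (φ σ i) := fun σ i => hf σ i
  have hφinj : Function.Injective φ := by
    rw [injective_iff_map_eq_one]
    intro σ hσ
    apply hext
    intro i
    rw [hφ, hσ]; rfl
  have halt : ∀ σ, φ σ ∈ alternatingGroup (Fin 4) := by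
    intro σ
    rw [Equiv.Perm.mem_alternatingGroup]
    have h1 : σ (Matrix.vandermonde r).det = (Matrix.vandermonde r).det := by
      rw [hq]; exact map_ratCast σ q
    have h2 : σ (Matrix.vandermonde r).det =
        ((Matrix.vandermonde r).submatrix (φ σ) id).det := by
      rw [AlgEquiv.map_det]
      congr 1
      ext i j
      simp [Matrix.vandermonde_apply, hφ]
    rw [h1, Matrix.det_permute, hq] at h2
    rcases Int.units_eq_one_or (Equiv.Perm.sign (φ σ)) with h | h
    · exact h
    · exfalso
      rw [h] at h2
      simp at h2
      apply hq0'
      linear_combination (1 / 2) * h2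
  let ψ : (K ≃ₐ[ℚ] K) →* alternatingGroup (Fin 4) := φ.codRestrict _ halt
  have hψinj : Function.Injective ψ := by
    intro a b h
    exact hφinj (congrArg Subtype.val h)
  have hrange : ψ.range = ⊤ := by
    apply aux_A4_top
    rwa [← Nat.card_congr (MonoidHom.ofInjective hψinj).toEquiv]
  exact ⟨MulEquiv.ofBijective ψ ⟨hψinj, MonoidHom.range_eq_top.1 hrange⟩⟩

/-- If the resolvent has no rational root, three divides the order of the Galois group. -/
lemma aux_three_dvd {K : Type*} [Field K] [Algebra ℚ K] [FiniteDimensional ℚ K] [IsGalois ℚ K]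
    (t : ℚ) (r : Fin 4 → K)
    (hr : ∀ x : K, 3 * x ^ 4 - 4 * x ^ 3 + 1 + 3 * (t : K) ^ 2 =
      3 * ((x - r 0) * (x - r 1) * (x - r 2) * (x - r 3)))
    (hno : ∀ y : ℚ, 9 * y ^ 3 ≠ (1 + 3 * t ^ 2) / 3 * (36 * y + 16)) :
    3 ∣ Nat.card (K ≃ₐ[ℚ] K) := by
  have : CharZero K := algebraRat.charZero K
  rw [IsGalois.card_aut_eq_finrank]
  obtain ⟨p, hp⟩ : ∃ p, p = (1 + 3 * t ^ 2) / 3 := ⟨_, rfl⟩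
  let Q : ℚ[X] := X ^ 3 + C (-4 * p) * X + C (-16 / 9 * p)
  have hdeg : Q.natDegree = 3 := by simp only [Q]; compute_degree!
  have hmonic : Q.Monic := by simp only [Q]; monicity!
  have hirr : Irreducible Q := by
    rw [hmonic.irreducible_iff_roots_eq_zero_of_degree_le_three (by omega) (by omega)]
    rw [Multiset.eq_zero_iff_forall_notMem]
    intro y hy
    have := (mem_roots'.1 hy).2
    simp only [Q, IsRoot, eval_add, eval_mul, eval_pow, eval_X, eval_C] at this
    apply hno y
    rw [← hp]
    linear_combination 9 * this
  obtain ⟨e1, e2, e3, e4⟩ := aux_vieta (t : K) _ _ _ _ hr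
  have hroot : aeval (r 0 * r 1 + r 2 * r 3) Q = 0 := by
    have hpK : (p : K) = (1 + 3 * (t : K) ^ 2) / 3 := by rw [hp]; push_cast; ring
    have : aeval (r 0 * r 1 + r 2 * r 3) Q =
        (r 0 * r 1 + r 2 * r 3) ^ 3 - 4 * p * (r 0 * r 1 + r 2 * r 3) - 16 / 9 * p := by
      simp [Q, map_ofNat]; ring
    rw [this, hpK, ← e4]
    generalize r 0 = a at *
    generalize r 1 = b at *
    generalize r 2 = c at *
    generalize r 3 = d at *
    linear_combination (a * b + c * d) ^ 2 * e2 - (a + b + c + d) * (a * b + c * d) * e3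
      + (a * b * c + a * b * d + a * c * d + b * c * d) * e3 - 4 * (a * b * c * d) * e2
      + (a * b * c * d) * (a + b + c + d + 4 / 3) * e1
  have hmin : minpoly ℚ (r 0 * r 1 + r 2 * r 3) = Q :=
    (minpoly.eq_of_irreducible_of_monic hirr hroot hmonic).symm
  have := minpoly.degree_dvd (K := ℚ) (L := K) (x := r 0 * r 1 + r 2 * r 3)
    (Algebra.IsIntegral.isIntegral _)
  rwa [hmin, hdeg] at this

/-- Complex conjugation. -/
lemma aux_two_dvd {K : Type} [Field K] [Algebra ℚ K] [FiniteDimensional ℚ K] [IsGalois ℚ K]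
    (t : ℚ) (ht : t ≠ 0) (x : K)
    (hx : 3 * x ^ 4 - 4 * x ^ 3 + 1 + 3 * (t : K) ^ 2 = 0) :
    2 ∣ Nat.card (K ≃ₐ[ℚ] K) := by
  let ι : K →ₐ[ℚ] ℂ := IsAlgClosed.lift
  let _ : Algebra K ℂ := ι.toRingHom.toAlgebra
  have : IsScalarTower ℚ K ℂ := IsScalarTower.of_algebraMap_eq' (ι.comp_algebraMap).symm
  let conj : ℂ ≃ₐ[ℚ] ℂ := Complex.conjAe.restrictScalars ℚ
  let τ : K ≃ₐ[ℚ] K := conj.restrictNormal K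
  have hτ : ∀ z, ι (τ z) = (starRingEnd ℂ) (ι z) := fun z =>
    AlgEquiv.restrictNormal_commutes conj K z
  have h2 : τ ^ 2 = 1 := by
    ext z
    apply ι.injective
    change ι (τ (τ z)) = ι z
    rw [hτ, hτ, Complex.conj_conj]
  have h1 : τ ≠ 1 := by
    intro h
    have h3 := hτ x
    rw [h] at h3
    obtain ⟨s, hs⟩ := Complex.conj_eq_iff_real.1 h3.symm
    have h4 := congrArg ι hx
    simp only [map_add, map_sub, map_mul, map_pow, map_ofNat, map_one, map_zero, map_ratCast] at h4
    rw [hs] at h4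
    have h5 : 3 * s ^ 4 - 4 * s ^ 3 + 1 + 3 * (t : ℝ) ^ 2 = 0 := by exact_mod_cast h4
    have h6 : (t : ℝ) ≠ 0 := by exact_mod_cast ht
    have h7 : 0 < (t : ℝ) ^ 2 := by positivity
    have h8 : 0 ≤ (s - 1) ^ 2 * (2 * s ^ 2 + (s + 1) ^ 2) := by positivity
    nlinarith
  rw [← orderOf_eq_prime h2 h1]
  exact orderOf_dvd_natCard τ

lemma aux_roots {K : Type*} [Field K] [Algebra ℚ K] (t : ℚ) (P : ℚ[X])
    (hP : P = 3 * X ^ 4 - 4 * X ^ 3 + 1 + C (3 * t ^ 2))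
    (hs : (P.map (algebraMap ℚ K)).Splits) :
    ∃ r : Fin 4 → K, ∀ x : K,
      3 * x ^ 4 - 4 * x ^ 3 + 1 + 3 * (t : K) ^ 2 =
      3 * ((x - r 0) * (x - r 1) * (x - r 2) * (x - r 3)) := by
  have hP' : P = C 3 * X ^ 4 + C (-4) * X ^ 3 + C (1 + 3 * t ^ 2) := by
    rw [hP]
    simp only [map_add, map_neg, map_ofNat, map_one]
    ring
  have hdeg : P.natDegree = 4 := by rw [hP']; compute_degree!
  have hlead : P.leadingCoeff = 3 := by
    rw [leadingCoeff, hdeg, hP']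
    simp only [coeff_add, coeff_C_mul, coeff_X_pow, coeff_C]
    norm_num
  have hc := hs.natDegree_eq_card_roots
  rw [natDegree_map, hdeg] at hc
  obtain ⟨a, b, c, d, h⟩ := Multiset.card_eq_four.1 hc.symm
  refine ⟨![a, b, c, d], fun x => ?_⟩
  have he := hs.eval_eq_prod_roots x
  rw [h, leadingCoeff_map, hlead] at he
  have h2 : eval x (P.map (algebraMap ℚ K)) =
      3 * x ^ 4 - 4 * x ^ 3 + 1 + 3 * (t : K) ^ 2 := by
    rw [eval_map_algebraMap]
    rw [hP]
    simp [map_ofNat]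
  rw [h2] at he
  rw [he]
  simp only [map_ofNat, Multiset.insert_eq_cons, Multiset.map_cons, Multiset.map_singleton,
    Multiset.prod_cons, Multiset.prod_singleton]
  change _ = 3 * ((x - a) * (x - b) * (x - c) * (x - d))
  ring

lemma aux_main {K : Type} [Field K] [Algebra ℚ K] (t : ℚ) (P : ℚ[X])
    (hP : P = 3 * X ^ 4 - 4 * X ^ 3 + 1 + C (3 * t ^ 2)) [IsSplittingField ℚ K P]
    (hext : ∀ σ τ : K ≃ₐ[ℚ] K, (∀ x ∈ P.rootSet K, σ x = τ x) → σ = τ) :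
    IsEmpty ((K ≃ₐ[ℚ] K) ≃* alternatingGroup (Fin 4)) ↔
      ∃ v : ℚ, v ^ 2 ≠ 1 ∧ t = (v ^ 3 - 9 * v) / (9 * (1 - v ^ 2)) := by
  have : CharZero K := algebraRat.charZero K
  have : FiniteDimensional ℚ K := IsSplittingField.finiteDimensional K P
  have : Normal ℚ K := Normal.of_isSplittingField P
  have : IsGalois ℚ K := ⟨⟩
  obtain ⟨r, hr⟩ := aux_roots (K := K) t P hP (IsSplittingField.splits K P)
  have hroot : ∀ x ∈ P.rootSet K,
      3 * x ^ 4 - 4 * x ^ 3 + 1 + 3 * (t : K) ^ 2 = 0 := by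
    intro x hx
    have h := (mem_rootSet'.1 hx).2
    rw [show aeval x P = aeval x (3 * X ^ 4 - 4 * X ^ 3 + 1 + C (3 * t ^ 2) : ℚ[X]) from
      congrArg _ hP] at h
    simpa [map_ofNat] using h
  constructor
  · intro hempty
    by_contra hno
    have ht : t ≠ 0 := by
      intro h
      exact hno ⟨0, by norm_num, by simp [h]⟩
    have hy : ∀ y : ℚ, 9 * y ^ 3 ≠ (1 + 3 * t ^ 2) / 3 * (36 * y + 16) :=
      fun y h => hno (aux_param t y h)
    have h3 := aux_three_dvd t r hr hy
    have h2 := aux_two_dvd t ht (r 0) (by rw [hr]; ring)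
    have h6 : 6 ∣ Nat.card (K ≃ₐ[ℚ] K) := by omega
    obtain ⟨e⟩ := aux_iso t ht r hr (by
      intro σ hσ
      refine hext σ 1 ?_
      intro x hx
      have h := hroot x hx
      rw [hr x] at h
      change σ x = x
      simp only [mul_eq_zero, sub_eq_zero] at h
      rcases h with h | ((h | h) | h) | h
      · norm_num at h
      all_goals rw [h]; exact hσ _) h6
    exact hempty.false e
  · rintro ⟨v, hv, ht⟩
    obtain ⟨y, hy⟩ := aux_param' t v hv ht
    constructor
    intro e
    have : Fact (Nat.Prime 3) := ⟨Nat.prime_three⟩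
    obtain ⟨g, hg⟩ := exists_prime_orderOf_dvd_card' (G := alternatingGroup (Fin 4)) 3
      (by rw [aux_A4_card]; norm_num)
    obtain ⟨σ, hσ⟩ := e.surjective g
    have ho : orderOf σ = 3 := by rw [← hg, ← hσ]; exact (MulEquiv.orderOf_eq e σ).symm
    have h3 : σ ^ 3 = 1 := by rw [← ho]; exact pow_orderOf_eq_one σ
    have h1 : σ = 1 := by
      refine hext _ _ ?_
      intro x hx
      exact aux_no_order_three t y hy σ h3 x (hroot x hx)
    rw [h1, orderOf_one] at ho
    norm_num at ho


/-- For `P(T,X) = 3X⁴ − 4X³ + 1 + 3T²` and `t ∈ ℚ`, the Galois group of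
the specialization `P(t,X) = 3X⁴ − 4X³ + 1 + 3t²` over `ℚ` fails to be isomorphic to
the alternating group `A₄` if and only if `t = (v³ − 9v)/(9(1 − v²))` for some rational
`v` with `v² ≠ 1`. -/
theorem stmt_10 (t : ℚ) :
    IsEmpty
      ((3 * X ^ 4 - 4 * X ^ 3 + 1 + C (3 * t ^ 2) : Polynomial ℚ).Gal ≃*
        alternatingGroup (Fin 4)) ↔
      ∃ v : ℚ, v ^ 2 ≠ 1 ∧ t = (v ^ 3 - 9 * v) / (9 * (1 - v ^ 2)) := by
  exact aux_main t _ rfl (fun _ _ h => Gal.ext _ h)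
end

section
/- For a rational number t, the polynomial X⁶ + t⁶ − 1 ∈ ℚ[X] is reducible over ℚ if and only if t ∈ {0, 1, −1}. -/
theorem coprime_congr {a b c : ℤ} (h : IsCoprime a b) (e : b = c) : IsCoprime a c := e ▸ h

/-- If `X` is on `Y² = X (X² + 6X - 3)`, then `X` or `-3/X` is a square. -/
theorem sqclass_A (x y : ℚ) (hx : x ≠ 0) (h : x * (x ^ 2 + 6 * x - 3) = y ^ 2) :
    (∃ a : ℚ, x = a ^ 2) ∨ (∃ a : ℚ, -3 / x = a ^ 2) := by
  obtain ⟨m, n, hn, hcop, rfl⟩ : ∃ m n : ℤ, n ≠ 0 ∧ IsCoprime m n ∧ x = m / n :=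
    ⟨x.num, x.den, by simp, Rat.isCoprime_num_den x, (Rat.num_div_den x).symm⟩
  have hnq : (n : ℚ) ≠ 0 := by exact_mod_cast hn
  have hmq : (m : ℚ) ≠ 0 := by
    rintro h0
    simp [h0] at hx
  have hsq : IsSquare ((m * n * (m ^ 2 + 6 * m * n - 3 * n ^ 2) : ℤ) : ℚ) := by
    refine ⟨y * n ^ 2, ?_⟩
    push_cast
    field_simp at h
    linear_combination n * h
  rw [Rat.isSquare_intCast_iff] at hsq
  obtain ⟨r, hr⟩ := hsq
  by_cases h3 : (3 : ℤ) ∣ m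
  · obtain ⟨k, rfl⟩ := h3
    have h3n : IsCoprime (3 : ℤ) n := hcop.of_mul_left_left
    have hkn : IsCoprime k n := hcop.of_mul_left_right
    have h3r : (3 : ℤ) ∣ r := by
      have : (3 : ℤ) ∣ r ^ 2 := ⟨3 * (k * n * (3 * k ^ 2 + 6 * k * n - n ^ 2)), by
        linear_combination -hr⟩
      exact Int.prime_three.dvd_of_dvd_pow this
    obtain ⟨s, rfl⟩ := h3r
    have hs : (k * n) * (3 * k ^ 2 + 6 * k * n - n ^ 2) = s ^ 2 := by linarith
    have c1 : IsCoprime k (3 * k ^ 2 + 6 * k * n - n ^ 2) := by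
      have := (hkn.pow_right (n := 2)).neg_right.add_mul_left_right (3 * k + 6 * n)
      exact coprime_congr this (by ring)
    have c2 : IsCoprime n (3 * k ^ 2 + 6 * k * n - n ^ 2) := by
      have := (h3n.symm.mul_right (hkn.symm.pow_right (n := 2))).add_mul_left_right (6 * k - n)
      exact coprime_congr this (by ring)
    obtain ⟨u, hu⟩ := Int.sq_of_isCoprime (c1.mul_left c2) hs
    obtain ⟨v, hv⟩ := Int.sq_of_isCoprime (c1.mul_left c2).symm ((mul_comm _ _).trans hs)
    rcases hu with hu | hu
    · exfalso
      have hn3 : ¬ (3 : ℤ) ∣ n := fun hd => by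
        have := Int.isUnit_iff.1 (h3n.isUnit_of_dvd' dvd_rfl hd)
        omega
      rcases hv with hv | hv
      · have : (3 : ℤ) ∣ v ^ 2 + n ^ 2 := ⟨k ^ 2 + 2 * k * n, by linear_combination -hv⟩
        have e1 : n % 3 = 1 ∨ n % 3 = 2 := by omega
        have e2 : v % 3 = 0 ∨ v % 3 = 1 ∨ v % 3 = 2 := by omega
        have := Int.emod_eq_zero_of_dvd this
        rcases e1 with e1 | e1 <;> rcases e2 with e2 | e2 | e2 <;>
          simp [Int.add_emod, pow_two, Int.mul_emod, e1, e2] at this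
      · rw [hu, hv] at hs
        have hk0 : k ≠ 0 := by rintro rfl; simp at hmq
        have hu0 : u ^ 2 ≠ 0 := by rw [← hu]; exact mul_ne_zero hk0 hn
        have hv0 : v = 0 := by
          have : 0 ≤ u ^ 2 * v ^ 2 := by positivity
          have : u ^ 2 * v ^ 2 = 0 := by nlinarith [sq_nonneg s]
          simpa [hu0] using (mul_eq_zero.1 this).resolve_left hu0
        subst hv0
        have : (3 : ℤ) ∣ n ^ 2 := ⟨k ^ 2 + 2 * k * n, by linear_combination -hv⟩
        exact hn3 (Int.prime_three.dvd_of_dvd_pow this)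
    · right
      have hk0 : (k : ℚ) ≠ 0 := by intro h; simp [h] at hmq
      refine ⟨u / k, ?_⟩
      have : (k : ℚ) * n = - u ^ 2 := by exact_mod_cast hu
      push_cast
      field_simp
      linear_combination - this
  · have hm3 : IsCoprime m 3 := ((Int.prime_three.coprime_iff_not_dvd).2 h3).symm
    have c1 : IsCoprime m (m ^ 2 + 6 * m * n - 3 * n ^ 2) := by
      have := (hm3.mul_right (hcop.pow_right (n := 2))).neg_right.add_mul_left_right (m + 6 * n)
      exact coprime_congr this (by ring)
    have c2 : IsCoprime n (m ^ 2 + 6 * m * n - 3 * n ^ 2) := by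
      have := (hcop.symm.pow_right (n := 2)).add_mul_left_right (6 * m - 3 * n)
      exact coprime_congr this (by ring)
    have hs : (m * n) * (m ^ 2 + 6 * m * n - 3 * n ^ 2) = r ^ 2 := by linarith
    obtain ⟨u, hu⟩ := Int.sq_of_isCoprime (c1.mul_left c2) hs
    obtain ⟨v, hv⟩ := Int.sq_of_isCoprime (c1.mul_left c2).symm ((mul_comm _ _).trans hs)
    rcases hu with hu | hu
    · left
      refine ⟨u / n, ?_⟩
      have : (m : ℚ) * n = u ^ 2 := by exact_mod_cast hu
      field_simp
      linear_combination this
    · exfalso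
      rcases hv with hv | hv
      · rw [hu, hv] at hs
        have hm0 : m ≠ 0 := by exact_mod_cast hmq
        have hu0 : u ^ 2 ≠ 0 := by
          intro h; rw [h] at hu; exact mul_ne_zero hm0 hn (by simpa using hu)
        have hv0 : v = 0 := by
          have : 0 ≤ u ^ 2 * v ^ 2 := by positivity
          have : u ^ 2 * v ^ 2 = 0 := by nlinarith [sq_nonneg r]
          simpa [hu0] using (mul_eq_zero.1 this).resolve_left hu0
        subst hv0
        have : (3 : ℤ) ∣ m ^ 2 := ⟨n ^ 2 - 2 * m * n, by linear_combination hv⟩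
        exact h3 (Int.prime_three.dvd_of_dvd_pow this)
      · have : (3 : ℤ) ∣ v ^ 2 + m ^ 2 := ⟨n ^ 2 - 2 * m * n, by linear_combination hv⟩
        have e1 : m % 3 = 1 ∨ m % 3 = 2 := by omega
        have e2 : v % 3 = 0 ∨ v % 3 = 1 ∨ v % 3 = 2 := by omega
        have := Int.emod_eq_zero_of_dvd this
        rcases e1 with e1 | e1 <;> rcases e2 with e2 | e2 | e2 <;>
          simp [Int.add_emod, pow_two, Int.mul_emod, e1, e2] at this

/-- If `x` is on `y² = x (x² - 3x + 3)`, then `x` or `3/x` is a square. -/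
theorem sqclass_B (x y : ℚ) (hx : x ≠ 0) (h : x * (x ^ 2 - 3 * x + 3) = y ^ 2) :
    (∃ a : ℚ, x = a ^ 2) ∨ (∃ a : ℚ, 3 / x = a ^ 2) := by
  have hxpos : 0 < x := by
    rcases lt_or_gt_of_ne hx with h1 | h1
    · nlinarith [sq_nonneg y, mul_pos (neg_pos.2 h1) (by nlinarith : 0 < x ^ 2 - 3 * x + 3)]
    · exact h1
  obtain ⟨m, n, hn, hcop, rfl⟩ : ∃ m n : ℤ, 0 < n ∧ IsCoprime m n ∧ x = m / n :=
    ⟨x.num, x.den, by exact_mod_cast x.den_pos, Rat.isCoprime_num_den x, (Rat.num_div_den x).symm⟩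
  have hnq : (0 : ℚ) < n := by exact_mod_cast hn
  have hmq : (0 : ℚ) < m := by
    rwa [lt_div_iff₀ hnq, zero_mul] at hxpos
  have hm : 0 < m := by exact_mod_cast hmq
  have hsq : IsSquare ((m * n * (m ^ 2 - 3 * m * n + 3 * n ^ 2) : ℤ) : ℚ) := by
    refine ⟨y * n ^ 2, ?_⟩
    push_cast
    field_simp at h
    linear_combination n * h
  rw [Rat.isSquare_intCast_iff] at hsq
  obtain ⟨r, hr⟩ := hsq
  by_cases h3 : (3 : ℤ) ∣ m
  · obtain ⟨k, rfl⟩ := h3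
    have h3n : IsCoprime (3 : ℤ) n := hcop.of_mul_left_left
    have hkn : IsCoprime k n := hcop.of_mul_left_right
    have h3r : (3 : ℤ) ∣ r := by
      have : (3 : ℤ) ∣ r ^ 2 := ⟨3 * (k * n * (3 * k ^ 2 - 3 * k * n + n ^ 2)), by
        linear_combination -hr⟩
      exact Int.prime_three.dvd_of_dvd_pow this
    obtain ⟨s, rfl⟩ := h3r
    have hs : (k * n) * (3 * k ^ 2 - 3 * k * n + n ^ 2) = s ^ 2 := by linarith
    have c1 : IsCoprime k (3 * k ^ 2 - 3 * k * n + n ^ 2) := by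
      have := (hkn.pow_right (n := 2)).add_mul_left_right (3 * k - 3 * n)
      exact coprime_congr this (by ring)
    have c2 : IsCoprime n (3 * k ^ 2 - 3 * k * n + n ^ 2) := by
      have := (h3n.symm.mul_right (hkn.symm.pow_right (n := 2))).add_mul_left_right (n - 3 * k)
      exact coprime_congr this (by ring)
    have hk0 : 0 < k := by omega
    obtain ⟨u, hu⟩ := Int.sq_of_isCoprime (c1.mul_left c2) hs
    rcases hu with hu | hu
    · right
      have hk0 : (0 : ℚ) < k := by exact_mod_cast hk0
      refine ⟨u / k, ?_⟩
      have : (k : ℚ) * n = u ^ 2 := by exact_mod_cast hu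
      push_cast
      field_simp
      linear_combination this
    · nlinarith [mul_pos hk0 hn, sq_nonneg u]
  · have hm3 : IsCoprime m 3 := ((Int.prime_three.coprime_iff_not_dvd).2 h3).symm
    have c1 : IsCoprime m (m ^ 2 - 3 * m * n + 3 * n ^ 2) := by
      have := (hm3.mul_right (hcop.pow_right (n := 2))).add_mul_left_right (m - 3 * n)
      exact coprime_congr this (by ring)
    have c2 : IsCoprime n (m ^ 2 - 3 * m * n + 3 * n ^ 2) := by
      have := (hcop.symm.pow_right (n := 2)).add_mul_left_right (3 * n - 3 * m)
      exact coprime_congr this (by ring)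
    have hs : (m * n) * (m ^ 2 - 3 * m * n + 3 * n ^ 2) = r ^ 2 := by linarith
    obtain ⟨u, hu⟩ := Int.sq_of_isCoprime (c1.mul_left c2) hs
    rcases hu with hu | hu
    · left
      refine ⟨u / n, ?_⟩
      have : (m : ℚ) * n = u ^ 2 := by exact_mod_cast hu
      field_simp
      linear_combination this
    · nlinarith [mul_pos hm hn, sq_nonneg u]

theorem quartic_ne_zero (z w : ℚ) (h : z ^ 4 - 3 * z ^ 2 + 3 = w ^ 2) : z ≠ 0 := by
  rintro rfl
  have : IsSquare ((3 : ℕ) : ℚ) := ⟨w, by push_cast; linarith⟩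
  rw [Rat.isSquare_natCast_iff] at this
  exact Nat.prime_three.not_isSquare this

/-- Halving: `z² = x(2P)` with `x(P) = v²`. -/
theorem halving (z w : ℚ) (h : z ^ 4 - 3 * z ^ 2 + 3 = w ^ 2) :
    ∃ v q : ℚ, v ^ 4 - 3 * v ^ 2 + 3 = q ^ 2 ∧ v ≠ 0 ∧ z * (2 * v * q) = v ^ 4 - 3 := by
  have hz := quartic_ne_zero z w h
  -- choose the sign of `w`
  obtain ⟨a, ha0, ha⟩ : ∃ a : ℚ, a ≠ 0 ∧ a ^ 4 + 6 * a ^ 2 - 3 = 4 * z ^ 2 * a ^ 2 := by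
    have hX0 : 2 * z ^ 2 - 3 + 2 * w ≠ 0 := by
      intro h0
      have : (2 * z ^ 2 - 3 + 2 * w) * (2 * z ^ 2 - 3 - 2 * w) = -3 := by
        linear_combination 4 * h
      rw [h0] at this
      norm_num at this
    have hX : (2 * z ^ 2 - 3 + 2 * w) ^ 2 + 6 * (2 * z ^ 2 - 3 + 2 * w) - 3
        = 4 * z ^ 2 * (2 * z ^ 2 - 3 + 2 * w) := by linear_combination -4 * h
    generalize 2 * z ^ 2 - 3 + 2 * w = X at hX0 hX
    rcases sqclass_A X (2 * z * X) hX0 (by rw [hX]; ring) with ⟨a, rfl⟩ | ⟨a, ha⟩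
    · exact ⟨a, by rintro rfl; simp at hX0, by linear_combination hX⟩
    · refine ⟨a, ?_, ?_⟩
      · rintro rfl
        field_simp at ha
        norm_num at ha
      · have e : a ^ 4 = (a ^ 2) ^ 2 := by ring
        rw [e, ← ha]
        field_simp
        linear_combination -hX
  -- the point `x'`
  obtain ⟨x, hx⟩ : ∃ x : ℚ, x = (3 + a ^ 2 + 2 * z * a) / 2 := ⟨_, rfl⟩
  have hquad : x ^ 2 - (3 + a ^ 2) * x + 3 = 0 := by
    rw [hx]; linear_combination -ha / 4
  have hx0 : x ≠ 0 := by
    rintro rfl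
    norm_num at hquad
  have hcurve : x * (x ^ 2 - 3 * x + 3) = (a * x) ^ 2 := by linear_combination x * hquad
  have hdbl : z * (2 * (a * x)) = x ^ 2 - 3 := by
    have : 2 * z * a = 2 * x - 3 - a ^ 2 := by rw [hx]; ring
    linear_combination x * this + hquad
  rcases sqclass_B x (a * x) hx0 hcurve with ⟨v, hv⟩ | ⟨v, hv⟩
  · have hv0 : v ≠ 0 := by rintro rfl; simp at hv; exact hx0 hv
    refine ⟨v, a * v, ?_, hv0, ?_⟩
    · rw [hv] at hquad
      linear_combination hquad
    · rw [hv] at hdbl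
      linear_combination hdbl
  · have hv0 : v ≠ 0 := by
      rintro rfl
      field_simp at hv
      norm_num at hv
    have hxv : x = 3 / v ^ 2 := by
      rw [← hv]; field_simp
    rw [hxv] at hquad hdbl
    refine ⟨v, -a * v, ?_, hv0, ?_⟩
    · field_simp at hquad
      linear_combination hquad / 3
    · field_simp at hdbl
      linear_combination -hdbl

theorem quartic_points (N : ℕ) : ∀ z w : ℚ, z.den ≤ N → z ^ 4 - 3 * z ^ 2 + 3 = w ^ 2 →
    z ^ 2 = 1 := by
  induction N with
  | zero => intro z w hz; have := z.den_pos; omega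
  | succ N ih =>
    intro z w hzN h
    obtain ⟨v, q, hv, hv0, hz⟩ := halving z w h
    have hv1 : v ^ 2 = 1 := by
      obtain ⟨C, B, hB, hcop, hBd, hvC⟩ :
          ∃ C B : ℤ, 0 < B ∧ IsCoprime C B ∧ B = v.den ∧ v = C / B :=
        ⟨v.num, v.den, by exact_mod_cast v.den_pos, Rat.isCoprime_num_den v, rfl,
          (Rat.num_div_den v).symm⟩
      have hBq : (B : ℚ) ≠ 0 := by exact_mod_cast hB.ne'
      obtain ⟨D, hD⟩ : ∃ D : ℤ, q * B ^ 2 = D := by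
        have : IsSquare ((C ^ 4 - 3 * C ^ 2 * B ^ 2 + 3 * B ^ 4 : ℤ) : ℚ) := by
          refine ⟨q * B ^ 2, ?_⟩
          push_cast
          rw [hvC] at hv
          field_simp at hv
          linear_combination hv
        have h2 := this
        rw [Rat.isSquare_intCast_iff] at this
        obtain ⟨D, hD⟩ := this
        have h3 : (q * B ^ 2) ^ 2 = (D : ℚ) ^ 2 := by
          have : ((C ^ 4 - 3 * C ^ 2 * B ^ 2 + 3 * B ^ 4 : ℤ) : ℚ) = D * D := by
            exact_mod_cast hD
          push_cast at this
          rw [hvC] at hv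
          field_simp at hv
          linear_combination this - hv
        rcases sq_eq_sq_iff_eq_or_eq_neg.1 h3 with h3 | h3
        · exact ⟨D, h3⟩
        · exact ⟨-D, by push_cast; exact h3⟩
      have hq : q = D / B ^ 2 := by rw [← hD]; field_simp
      have hDeq : C ^ 4 - 3 * C ^ 2 * B ^ 2 + 3 * B ^ 4 = D ^ 2 := by
        rw [hvC, hq] at hv
        field_simp at hv
        have : (C ^ 4 - 3 * C ^ 2 * B ^ 2 + 3 * B ^ 4 : ℚ) = D ^ 2 := by linear_combination hv
        exact_mod_cast this
      have hzeq : z.num * (2 * (C * B * D)) = z.den * (C ^ 4 - 3 * B ^ 4) := by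
        rw [hvC, hq, ← Rat.num_div_den z] at hz
        have hd : (z.den : ℚ) ≠ 0 := by exact_mod_cast z.den_nz
        field_simp at hz
        have : (z.num * (2 * (C * B * D)) : ℚ) = z.den * (C ^ 4 - 3 * B ^ 4) := by
          linear_combination hz
        exact_mod_cast this
      have hC3 : ¬ (3 : ℤ) ∣ C := by
        rintro ⟨c, rfl⟩
        have hD3 : (3 : ℤ) ∣ D := Int.prime_three.dvd_of_dvd_pow (n := 2)
          ⟨27 * c ^ 4 - 9 * c ^ 2 * B ^ 2 + B ^ 4, by linear_combination -hDeq⟩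
        obtain ⟨d, rfl⟩ := hD3
        have hB3 : (3 : ℤ) ∣ B := Int.prime_three.dvd_of_dvd_pow (n := 4)
          ⟨d ^ 2 - 9 * c ^ 4 + 3 * c ^ 2 * B ^ 2, by linarith⟩
        have := Int.isUnit_iff.1 (hcop.isUnit_of_dvd' (dvd_mul_right 3 c) hB3)
        omega
      have hc3 : IsCoprime C 3 := ((Int.prime_three.coprime_iff_not_dvd).2 hC3).symm
      have k1 : IsCoprime C (C ^ 4 - 3 * B ^ 4) := by
        have := (hc3.mul_right (hcop.pow_right (n := 4))).neg_right.add_mul_left_right (C ^ 3)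
        exact coprime_congr this (by ring)
      have k2 : IsCoprime B (C ^ 4 - 3 * B ^ 4) := by
        have := (hcop.symm.pow_right (n := 4)).add_mul_left_right (-3 * B ^ 3)
        exact coprime_congr this (by ring)
      have k3 : IsCoprime D (C ^ 4 - 3 * B ^ 4) := by
        -- `9 B⁸` is a combination of `D²` and `C⁴ - 3 B⁴`
        have h9 : IsCoprime (3 ^ 2 * B ^ 8) (C ^ 4 - 3 * B ^ 4) := by
          refine (IsCoprime.mul_left (IsCoprime.pow_left ?_) (k2.pow_left (m := 8)))
          have := (hc3.symm.pow_right (n := 4)).add_mul_left_right (-B ^ 4)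
          exact coprime_congr this (by ring)
        obtain ⟨a, b, hab⟩ := h9
        have : IsCoprime (D ^ 2) (C ^ 4 - 3 * B ^ 4) :=
          ⟨a * (6 * B ^ 4 + 3 * B ^ 2 * C ^ 2), b + a * (3 * B ^ 4 - 3 * B ^ 2 * C ^ 2), by
            rw [← hDeq]; linear_combination hab⟩
        exact (IsCoprime.pow_left_iff (by norm_num)).1 this
      have hdvd : C * B * D ∣ (z.den : ℤ) :=
        ((k1.mul_left k2).mul_left k3).dvd_of_dvd_mul_right
          ⟨z.num * 2, by linear_combination -hzeq⟩
      by_cases hle : v.den ≤ N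
      · exact ih v q hle hv
      · have hle2 := Int.le_of_dvd (by exact_mod_cast z.den_pos) ((abs_dvd _ _).2 hdvd)
        have hBz : (z.den : ℤ) ≤ B := by omega
        rw [abs_mul, abs_mul, abs_of_pos hB] at hle2
        have hC0 : C ≠ 0 := by rintro rfl; simp at hC3
        have hD0 : D ≠ 0 := by
          rintro rfl
          nlinarith [sq_nonneg (2 * C ^ 2 - 3 * B ^ 2), pow_pos hB 4]
        have hC1 : 1 ≤ |C| := Int.one_le_abs hC0
        have hD1 : 1 ≤ |D| := Int.one_le_abs hD0
        have hCD : |C| * |D| ≤ 1 := by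
          by_contra hcon
          nlinarith
        have hCe : |C| = 1 := by nlinarith
        have hDe : |D| = 1 := by nlinarith
        have hC2 : C ^ 2 = 1 := by rw [← sq_abs, hCe]; norm_num
        have hD2 : D ^ 2 = 1 := by rw [← sq_abs, hDe]; norm_num
        have hB2 : B ^ 2 = 1 := by
          have e : C ^ 4 = (C ^ 2) ^ 2 := by ring
          rw [e, hD2, hC2] at hDeq
          have : B ^ 2 * (B ^ 2 - 1) = 0 := by linarith
          rcases mul_eq_zero.1 this with h | h
          · exact absurd h (by positivity)
          · linarith
        rw [hvC, div_pow]
        have e1 : (C : ℚ) ^ 2 = 1 := by exact_mod_cast hC2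
        have e2 : (B : ℚ) ^ 2 = 1 := by exact_mod_cast hB2
        rw [e1, e2]; norm_num
    have e : v ^ 4 = 1 := by
      have : v ^ 4 = (v ^ 2) ^ 2 := by ring
      rw [this, hv1]; norm_num
    rw [e, hv1] at hv
    rw [e] at hz
    have h2 : z ^ 2 * (4 * v ^ 2 * q ^ 2) = 4 := by
      have : (z * (2 * v * q)) ^ 2 = 4 := by rw [hz]; norm_num
      linear_combination this
    rw [hv1, ← hv] at h2
    linarith

theorem square_case (t s : ℚ) (h : s ^ 2 = 1 - t ^ 6) : t = 0 ∨ t = 1 ∨ t = -1 := by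
  by_cases h1 : t ^ 2 = 1
  · right; exact sq_eq_one_iff.1 h1
  left
  have hx0 : 1 - t ^ 2 ≠ 0 := fun h => h1 (by linarith)
  have hc : (1 - t ^ 2) * ((1 - t ^ 2) ^ 2 - 3 * (1 - t ^ 2) + 3) = s ^ 2 := by
    rw [h]; ring
  rcases sqclass_B _ _ hx0 hc with ⟨z, hz⟩ | ⟨z, hz⟩
  · have hz0 : z ≠ 0 := by rintro rfl; exact hx0 (by simpa using hz)
    have := quartic_points z.den z (s / z) le_rfl (by
      rw [hz] at hc
      field_simp
      linear_combination hc)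
    rw [this] at hz
    have : t ^ 2 = 0 := by linarith
    simpa using this
  · have hz0 : z ≠ 0 := by
      rintro rfl
      field_simp at hz
      norm_num at hz
    have hxz : 1 - t ^ 2 = 3 / z ^ 2 := by
      rw [← hz]; field_simp
    have := quartic_points z.den z (s * z ^ 3 / 3) le_rfl (by
      rw [hxz] at hc
      field_simp at hc
      field_simp
      linear_combination hc)
    rw [this] at hxz
    nlinarith [sq_nonneg t]

theorem cube_case (t s : ℚ) (h : s ^ 3 = 1 - t ^ 6) : t = 0 ∨ t = 1 ∨ t = -1 := by
  by_cases ht : t = 0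
  · exact Or.inl ht
  right
  by_cases hs : s = 0
  · rw [hs] at h
    have h6 : t ^ 6 = 1 := by linarith
    have : t ^ 2 = 1 := by
      have h0 : (t ^ 2 - 1) * (t ^ 4 + t ^ 2 + 1) = 0 := by linear_combination h6
      rcases mul_eq_zero.1 h0 with h | h
      · linarith
      · nlinarith [sq_nonneg t, sq_nonneg (t ^ 2)]
    exact sq_eq_one_iff.1 this
  · exfalso
    exact fermatLastTheoremFor_iff_rat.1 fermatLastTheoremThree (t ^ 2) s 1 (pow_ne_zero 2 ht) hs
      one_ne_zero (by rw [h]; ring)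

open Polynomial in
theorem irred_six {K : Type*} [Field K] (a : K) (h2 : ∀ b : K, b ^ 2 ≠ a) (h3 : ∀ b : K, b ^ 3 ≠ a) :
    Irreducible (X ^ 6 - C a : K[X]) := by
  have hm : Irreducible (X ^ 3 - C a : K[X]) := X_pow_sub_C_irreducible_of_prime Nat.prime_three h3
  refine X_pow_mul_sub_C_irreducible (n := 2) (m := 3) hm ?_
  intro E _ _ x hx
  refine X_pow_sub_C_irreducible_of_prime Nat.prime_two ?_
  intro b hb
  have hint : IsIntegral K x := by
    by_contra hh
    rw [minpoly.eq_zero hh] at hx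
    exact hm.ne_zero hx.symm
  apply h2 (Algebra.norm K b)
  rw [← map_pow, hb, ← IntermediateField.adjoin.powerBasis_gen hint,
    Algebra.PowerBasis.norm_gen_eq_coeff_zero_minpoly]
  simp [IntermediateField.minpoly_gen, hx]
  ring

/-- For a rational number `t`, the polynomial `X⁶ + t⁶ − 1 ∈ ℚ[X]` is
reducible over `ℚ` if and only if `t ∈ {0, 1, −1}`. -/
theorem stmt_11 (t : ℚ) :
    ¬ Irreducible (Polynomial.X ^ 6 + Polynomial.C (t ^ 6 - 1) : Polynomial ℚ) ↔
      t = 0 ∨ t = 1 ∨ t = -1 := by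
  have e : (Polynomial.X ^ 6 + Polynomial.C (t ^ 6 - 1) : Polynomial ℚ)
      = Polynomial.X ^ 6 - Polynomial.C (1 - t ^ 6) := by
    rw [← neg_sub (1 : ℚ), map_neg, ← sub_eq_add_neg]
  rw [e]
  constructor
  · intro h
    by_contra hcon
    exact h (irred_six _ (fun b hb => hcon (square_case t b hb))
      (fun b hb => hcon (cube_case t b hb)))
  · intro h hirr
    rcases h with rfl | rfl | rfl
    · exact pow_ne_of_irreducible_X_pow_sub_C hirr (m := 2) (by norm_num) (by norm_num) 1
        (by norm_num)
    · exact pow_ne_of_irreducible_X_pow_sub_C hirr (m := 2) (by norm_num) (by norm_num) 0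
        (by norm_num)
    · exact pow_ne_of_irreducible_X_pow_sub_C hirr (m := 2) (by norm_num) (by norm_num) 0
        (by norm_num)
end

section
/- For a rational number t, the polynomial X⁶ + t⁶ − 1 ∈ ℚ[X] has a rational root if and only if t ∈ {0, 1, −1}. Equivalently, if x and t are rational numbers with x⁶ + t⁶ = 1, then t ∈ {0, 1, −1} (and correspondingly x ∈ {±1, 0}). -/
/-- For a rational number `t`, the polynomial `X⁶ + t⁶ − 1 ∈ ℚ[X]` has a
rational root if and only if `t ∈ {0, 1, −1}`; equivalently, rational solutions of
`x⁶ + t⁶ = 1` have `t ∈ {0, 1, −1}`. -/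
theorem stmt_12 (t : ℚ) :
    (∃ x : ℚ, x ^ 6 + t ^ 6 = 1) ↔ t = 0 ∨ t = 1 ∨ t = -1 := by
  constructor
  · rintro ⟨x, hx⟩
    by_cases ht : t = 0
    · exact Or.inl ht
    right
    by_cases hx0 : x = 0
    · subst hx0
      have h6 : t ^ 6 = 1 := by simpa using hx
      exact (pow_eq_one_iff_cases.1 h6).elim (fun h => by simp at h)
        (fun h => h.imp id (fun h => h.1))
    · exact absurd (by simpa using hx)
        (FermatLastTheoremFor.mono (by norm_num : 3 ∣ 6) fermatLastTheoremThree
          |> fermatLastTheoremFor_iff_rat.1 |> fun H => H x t 1 hx0 ht one_ne_zero)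
  · rintro (rfl | rfl | rfl)
    · exact ⟨1, by norm_num⟩
    · exact ⟨0, by norm_num⟩
    · exact ⟨0, by norm_num⟩
end

section
/- The only rational points on the genus-2 hyperelliptic curve defined by v² = 3(t − 1)(t + 1)(t² − t + 1)(t² + t + 1), equivalently v² = 3(t⁶ − 1), are the two Weierstrass points (t, v) = (1, 0) and (t, v) = (−1, 0). That is, if t, v ∈ ℚ satisfy v² = 3(t⁶ − 1), then v = 0 and t = ±1. -/
/-- Coprime nonnegative factors of a perfect power are perfect powers. -/
theorem aux_pow (A B C : ℤ) (k : ℕ) (hk : k ≠ 0) (hA : 0 < A) (hB : 0 < B) (hC : 0 < C)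
    (h : IsCoprime A B) (e : A * B = C ^ k) :
    ∃ d f : ℤ, 0 < d ∧ 0 < f ∧ A = d ^ k ∧ B = f ^ k ∧ C = d * f := by
  lift A to ℕ using hA.le
  lift B to ℕ using hB.le
  lift C to ℕ using hC.le
  have hc : Nat.Coprime A B := Nat.isCoprime_iff_coprime.mp h
  have e' : A * B = C ^ k := by exact_mod_cast e
  obtain ⟨d, hd⟩ := exists_eq_pow_of_mul_eq_pow (a := A) (b := B)
    (Nat.isUnit_iff.mpr hc) e'
  obtain ⟨f, hf⟩ := exists_eq_pow_of_mul_eq_pow (a := B) (b := A)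
    (Nat.isUnit_iff.mpr hc.symm) (by rw [mul_comm]; exact e')
  have hCe : C = d * f := by
    rw [hd, hf, ← mul_pow] at e'
    exact (Nat.pow_left_injective hk e').symm
  have hC' : 0 < C := by exact_mod_cast hC
  have hd0 : 0 < d := Nat.pos_of_ne_zero (by rintro rfl; simp [hCe] at hC')
  have hf0 : 0 < f := Nat.pos_of_ne_zero (by rintro rfl; simp [hCe] at hC')
  exact ⟨d, f, by exact_mod_cast hd0, by exact_mod_cast hf0, by exact_mod_cast hd,
    by exact_mod_cast hf, by exact_mod_cast hCe⟩

theorem aux_cop3 (n : ℤ) (h : ¬ (3 : ℤ) ∣ n) : IsCoprime (3 : ℤ) n :=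
  (Int.prime_three.coprime_iff_not_dvd).mpr h

theorem aux_cop2 (n : ℤ) (h : ¬ (2 : ℤ) ∣ n) : IsCoprime (2 : ℤ) n :=
  (Int.prime_two.coprime_iff_not_dvd).mpr h

theorem aux_fourth_mod3 (q : ℤ) (h : ¬ (3 : ℤ) ∣ q) : q ^ 4 % 3 = 1 := by
  have h3 : q % 3 = 1 ∨ q % 3 = 2 := by omega
  rcases h3 with h3 | h3 <;> simp [pow_succ, Int.mul_emod, h3]

/-- The core case, which reduces to Fermat's theorem for exponent four. -/
theorem aux_core (x y α β : ℤ) (hx : 0 < x) (hy : 0 < y)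
    (hxy : IsCoprime x y) (hab : IsCoprime α β) (h3 : ¬ (3 : ℤ) ∣ x)
    (hm : x * y = α * β) (he : x ^ 4 - 81 * y ^ 4 = β ^ 4 - 108 * α ^ 4) : False := by
  obtain ⟨p, q, ⟨r, rfl⟩, ⟨s, rfl⟩, rfl⟩ := exists_dvd_and_dvd_of_dvd_mul (Dvd.intro y hm)
  have hp0 : p ≠ 0 := by rintro rfl; simp at hx
  have hq0 : q ≠ 0 := by rintro rfl; simp at hx
  have hyr : y = r * s := by
    apply mul_left_cancel₀ (mul_ne_zero hp0 hq0)
    rw [hm]; ring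
  subst hyr
  have hr0 : r ≠ 0 := by rintro rfl; simp at hy
  have hps : IsCoprime p s := hxy.of_mul_left_left.of_mul_right_right
  have hqr : IsCoprime q r := hxy.of_mul_left_right.of_mul_right_left
  have hq3 : ¬ (3 : ℤ) ∣ q := fun h => h3 (Dvd.dvd.mul_left h p)
  have hcp := aux_cop3 q hq3
  have he' : q ^ 4 * (p ^ 4 - s ^ 4) = 27 * r ^ 4 * (3 * s ^ 4 - 4 * p ^ 4) := by
    linear_combination he
  have hc1 : IsCoprime (q ^ 4) (27 * r ^ 4) := by
    have h27 : IsCoprime (q ^ 4) ((3 : ℤ) ^ 3) := hcp.symm.pow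
    norm_num at h27
    exact h27.mul_right hqr.pow
  obtain ⟨k, hk⟩ := hc1.dvd_of_dvd_mul_left (Dvd.intro _ he')
  have hA : p ^ 4 - s ^ 4 = 27 * r ^ 4 * k := by
    apply mul_left_cancel₀ (pow_ne_zero 4 hq0)
    rw [he', hk]; ring
  have hku : IsUnit k := by
    have hp4 : IsCoprime (p ^ 4) (s ^ 4) := hps.pow
    apply hp4.isUnit_of_dvd'
    · exact ⟨-(3 * (27 * r ^ 4) + q ^ 4), by linear_combination (-3) * hA - hk⟩
    · exact ⟨-(4 * (27 * r ^ 4) + q ^ 4), by linear_combination (-4) * hA - hk⟩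
  rcases Int.isUnit_iff.mp hku with rfl | rfl
  · have hp4 : p ^ 4 % 3 = 1 :=
      aux_fourth_mod3 p (fun h => h3 (Dvd.dvd.mul_right h q))
    have hq4 := aux_fourth_mod3 q hq3
    omega
  · apply not_fermat_42 (a := q) (b := 3 * r) (c := p ^ 2) hq0 (by simpa using hr0)
    linear_combination 3 * hA + hk

theorem aux_split (P Q s : ℤ) (hP : 0 < P) (hQ : 0 < Q) (hs : 0 < s) (h : IsCoprime P Q)
    (e : P * Q = 108 * s ^ 4) :
    ∃ α β : ℤ, 0 < α ∧ 0 < β ∧ IsCoprime α β ∧ s = α * β ∧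
      ((P = 108 * α ^ 4 ∧ Q = β ^ 4) ∨ (P = 27 * α ^ 4 ∧ Q = 4 * β ^ 4) ∨
       (Q = 108 * α ^ 4 ∧ P = β ^ 4) ∨ (Q = 27 * α ^ 4 ∧ P = 4 * β ^ 4)) := by
  wlog h3 : ¬ (3 : ℤ) ∣ Q generalizing P Q
  · have h3P : ¬ (3 : ℤ) ∣ P := by
      intro h3P
      have := h.isUnit_of_dvd' h3P (not_not.mp h3)
      norm_num [Int.isUnit_iff] at this
    obtain ⟨α, β, h1, h2, h4, h5, h6⟩ :=
      this Q P hQ hP h.symm (by rw [mul_comm]; exact e) h3P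
    exact ⟨α, β, h1, h2, h4, h5, by tauto⟩
  have h27 : (27 : ℤ) ∣ P := by
    have hc : IsCoprime ((3 : ℤ) ^ 3) Q := (aux_cop3 Q h3).pow_left
    norm_num at hc
    exact hc.dvd_of_dvd_mul_right ⟨4 * s ^ 4, by rw [e]; ring⟩
  obtain ⟨P, rfl⟩ := h27
  have hP' : 0 < P := by omega
  have h' : IsCoprime P Q := h.of_mul_left_right
  have e' : P * Q = 4 * s ^ 4 := by linarith
  by_cases h2 : (2 : ℤ) ∣ Q
  · have h2P : ¬ (2 : ℤ) ∣ P := by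
      intro h2P
      have := h'.isUnit_of_dvd' h2P h2
      norm_num [Int.isUnit_iff] at this
    have h4 : (4 : ℤ) ∣ Q := by
      have hc : IsCoprime ((2 : ℤ) ^ 2) P := (aux_cop2 P h2P).pow_left
      norm_num at hc
      exact hc.dvd_of_dvd_mul_left ⟨s ^ 4, by rw [e']⟩
    obtain ⟨Q, rfl⟩ := h4
    have h'' : IsCoprime P Q := h'.of_mul_right_right
    obtain ⟨d, f, hd, hf, rfl, rfl, rfl⟩ := aux_pow P Q s 4 (by norm_num) hP' (by omega) hs h''
      (by linarith)
    exact ⟨d, f, hd, hf, (IsCoprime.pow_iff (by norm_num) (by norm_num)).mp h'', rfl,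
      Or.inr (Or.inl ⟨rfl, rfl⟩)⟩
  · have h4 : (4 : ℤ) ∣ P := by
      have hc : IsCoprime ((2 : ℤ) ^ 2) Q := (aux_cop2 Q h2).pow_left
      norm_num at hc
      exact hc.dvd_of_dvd_mul_right ⟨s ^ 4, by rw [e']⟩
    obtain ⟨P, rfl⟩ := h4
    have h'' : IsCoprime P Q := h'.of_mul_left_right
    obtain ⟨d, f, hd, hf, rfl, rfl, rfl⟩ := aux_pow P Q s 4 (by norm_num) (by omega) hQ hs h''
      (by linarith)
    exact ⟨d, f, hd, hf, (IsCoprime.pow_iff (by norm_num) (by norm_num)).mp h'', rfl,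
      Or.inl ⟨by ring, rfl⟩⟩

theorem aux_fourth_mod16 (q : ℤ) : (q % 2 = 0 ∧ q ^ 4 % 16 = 0) ∨ (q % 2 = 1 ∧ q ^ 4 % 16 = 1) := by
  have h : q % 16 = 0 ∨ q % 16 = 1 ∨ q % 16 = 2 ∨ q % 16 = 3 ∨ q % 16 = 4 ∨ q % 16 = 5 ∨
    q % 16 = 6 ∨ q % 16 = 7 ∨ q % 16 = 8 ∨ q % 16 = 9 ∨ q % 16 = 10 ∨ q % 16 = 11 ∨
    q % 16 = 12 ∨ q % 16 = 13 ∨ q % 16 = 14 ∨ q % 16 = 15 := by omega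
  rcases h with h | h | h | h | h | h | h | h | h | h | h | h | h | h | h | h <;>
  first
  | (left; refine ⟨by omega, ?_⟩; simp [pow_succ, Int.mul_emod, h])
  | (right; refine ⟨by omega, ?_⟩; simp [pow_succ, Int.mul_emod, h])

theorem aux_second (x y n : ℤ) (hx : 0 < x) (hy : 0 < y) (hxy : IsCoprime x y)
    (h3 : ¬ (3 : ℤ) ∣ x) (hodd : (x + y) % 2 = 1) (hn : 0 < n)
    (he : n ^ 2 = (x ^ 4 - 81 * y ^ 4) ^ 2 + 432 * (x * y) ^ 4) : False := by
  have hx16 := aux_fourth_mod16 x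
  have hy16 := aux_fourth_mod16 y
  have hx3 := aux_fourth_mod3 x h3
  have hdodd : (x ^ 4 - 81 * y ^ 4) % 2 = 1 := by omega
  have hnodd : n % 2 = 1 := by
    by_contra hc
    obtain ⟨m, rfl⟩ : ∃ m, n = 2 * m := ⟨n / 2, by omega⟩
    obtain ⟨m', hm'⟩ : ∃ m', x ^ 4 - 81 * y ^ 4 = 2 * m' + 1 :=
      ⟨(x ^ 4 - 81 * y ^ 4) / 2, by omega⟩
    rw [hm'] at he
    ring_nf at he
    omega
  obtain ⟨P, hP⟩ : ∃ P, n - (x ^ 4 - 81 * y ^ 4) = 2 * P :=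
    ⟨(n - (x ^ 4 - 81 * y ^ 4)) / 2, by omega⟩
  obtain ⟨Q, hQ⟩ : ∃ Q, n + (x ^ 4 - 81 * y ^ 4) = 2 * Q :=
    ⟨(n + (x ^ 4 - 81 * y ^ 4)) / 2, by omega⟩
  have hd : x ^ 4 - 81 * y ^ 4 = Q - P := by linarith
  have hPQ : P * Q = 108 * (x * y) ^ 4 := by
    have : (2 * P) * (2 * Q) = 432 * (x * y) ^ 4 := by
      rw [← hP, ← hQ]; linear_combination he
    linarith
  have hxy0 : 0 < x * y := by positivity
  have hpos : 0 < P * Q := by rw [hPQ]; positivity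
  have hsum : 0 < P + Q := by linarith
  have hP0 : 0 < P := by
    by_contra hc
    rcases pos_and_pos_or_neg_and_neg_of_mul_pos hpos with h | h <;> omega
  have hQ0 : 0 < Q := by
    by_contra hc
    rcases pos_and_pos_or_neg_and_neg_of_mul_pos hpos with h | h <;> omega
  have hcd : IsCoprime (x ^ 4 - 81 * y ^ 4) (108 * (x * y) ^ 4) := by
    have c2 : IsCoprime (x ^ 4 - 81 * y ^ 4) 2 := (aux_cop2 _ (by omega)).symm
    have c3 : IsCoprime (x ^ 4 - 81 * y ^ 4) 3 := (aux_cop3 _ (by omega)).symm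
    have cx : IsCoprime (x ^ 4 - 81 * y ^ 4) x := by
      have h1 : IsCoprime (81 * y ^ 4) x := by
        have h81 : IsCoprime ((3 : ℤ) ^ 4) x := (aux_cop3 x h3).pow_left
        norm_num at h81
        exact h81.mul_left hxy.symm.pow_left
      have h2 := (h1.neg_left).add_mul_left_left (x ^ 3)
      have e2 : x ^ 4 - 81 * y ^ 4 = -(81 * y ^ 4) + x * x ^ 3 := by ring
      rw [e2]
      exact h2
    have cy : IsCoprime (x ^ 4 - 81 * y ^ 4) y := by
      have h1 : IsCoprime (x ^ 4) y := hxy.pow_left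
      have h2 := h1.add_mul_left_left (-81 * y ^ 3)
      have e2 : x ^ 4 - 81 * y ^ 4 = x ^ 4 + y * (-81 * y ^ 3) := by ring
      rw [e2]
      exact h2
    have := ((c2.pow_right (n := 2)).mul_right (c3.pow_right (n := 3))).mul_right
      ((cx.mul_right cy).pow_right (n := 4))
    have e2 : (108 : ℤ) * (x * y) ^ 4 = 2 ^ 2 * 3 ^ 3 * (x * y) ^ 4 := by ring
    rw [e2]
    exact this
  have hco : IsCoprime P Q := by
    rw [← hPQ, hd] at hcd
    have h1 : IsCoprime (Q - P) P := hcd.of_mul_right_left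
    have h2 := h1.add_mul_left_left 1
    have h3 : Q - P + P * 1 = Q := by ring
    rw [h3] at h2
    exact h2.symm
  obtain ⟨α, β, hα, hβ, hab, hs, h⟩ := aux_split P Q (x * y) hP0 hQ0 hxy0 hco hPQ
  have hα16 := aux_fourth_mod16 α
  have hβ16 := aux_fourth_mod16 β
  have hβ3 : β ^ 4 % 3 = 0 ∨ β ^ 4 % 3 = 1 := by
    by_cases hb : (3 : ℤ) ∣ β
    · left
      exact Int.emod_eq_zero_of_dvd (dvd_pow hb (by norm_num))
    · right; exact aux_fourth_mod3 β hb
  rcases h with ⟨h1, h2⟩ | ⟨h1, h2⟩ | ⟨h1, h2⟩ | ⟨h1, h2⟩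
  · exact aux_core x y α β hx hy hxy hab h3 hs (by rw [hd, h1, h2])
  · omega
  · omega
  · omega

theorem aux_first (a b w : ℤ) (ha : 0 < a) (hb : 0 < b) (hab : IsCoprime a b) (hw : 0 < w)
    (he : w ^ 2 = 3 * (a ^ 6 - b ^ 6)) : False := by
  have h3w : (3 : ℤ) ∣ w := Int.prime_three.dvd_of_dvd_pow ⟨_, he⟩
  obtain ⟨z, rfl⟩ := h3w
  have hz : 3 * z ^ 2 = (a ^ 2 - b ^ 2) * (a ^ 4 + a ^ 2 * b ^ 2 + b ^ 4) := by
    apply mul_left_cancel₀ (three_ne_zero (α := ℤ))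
    linear_combination he
  have h3d : (3 : ℤ) ∣ a ^ 2 - b ^ 2 := by
    have h : (3 : ℤ) ∣ (a ^ 2 - b ^ 2) ^ 3 :=
      ⟨z ^ 2 - a ^ 2 * b ^ 2 * (a ^ 2 - b ^ 2), by linear_combination -hz⟩
    exact Int.prime_three.dvd_of_dvd_pow h
  have h3a : ¬ (3 : ℤ) ∣ a := by
    intro h
    have hb2 : (3 : ℤ) ∣ b ^ 2 := by
      have h2 : (3 : ℤ) ∣ a ^ 2 := dvd_pow h (by norm_num)
      omega
    have := hab.isUnit_of_dvd' h (Int.prime_three.dvd_of_dvd_pow hb2)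
    norm_num [Int.isUnit_iff] at this
  have h3b : ¬ (3 : ℤ) ∣ b := by
    intro h
    have ha2 : (3 : ℤ) ∣ a ^ 2 := by
      have h2 : (3 : ℤ) ∣ b ^ 2 := dvd_pow h (by norm_num)
      omega
    exact h3a (Int.prime_three.dvd_of_dvd_pow ha2)
  obtain ⟨m, hm⟩ := h3d
  set N : ℤ := a ^ 2 * b ^ 2 + 3 * m ^ 2 with hN
  have hq : a ^ 4 + a ^ 2 * b ^ 2 + b ^ 4 = 3 * N := by
    have : (a ^ 2 - b ^ 2) ^ 2 = (3 * m) ^ 2 := by rw [hm]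
    linear_combination this
  have hz2 : z ^ 2 = 3 * (m * N) := by
    rw [hm, hq] at hz; linarith
  obtain ⟨k, rfl⟩ : (3 : ℤ) ∣ z := Int.prime_three.dvd_of_dvd_pow ⟨_, hz2⟩
  have hk : m * N = 3 * k ^ 2 := by linarith
  have h3N : ¬ (3 : ℤ) ∣ N := by
    intro h
    have h1 : (3 : ℤ) ∣ a ^ 2 * b ^ 2 := by omega
    rcases Int.prime_three.dvd_or_dvd h1 with h1 | h1
    · exact h3a (Int.prime_three.dvd_of_dvd_pow h1)
    · exact h3b (Int.prime_three.dvd_of_dvd_pow h1)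
  obtain ⟨m', rfl⟩ : (3 : ℤ) ∣ m :=
    (aux_cop3 N h3N).dvd_of_dvd_mul_right ⟨_, hk⟩
  have hk' : m' * N = k ^ 2 := by linarith
  have hN0 : 0 < N := by positivity
  have hk0 : 0 < k := by omega
  have hm0 : 0 < m' := by
    by_contra hc
    have : m' * N ≤ 0 := mul_nonpos_of_nonpos_of_nonneg (by omega) hN0.le
    have : 0 < k ^ 2 := by positivity
    omega
  have hdm : IsCoprime (9 * m') (a * b) := by
    have e1 : 9 * m' = a ^ 2 - b ^ 2 := by linarith
    rw [e1]
    apply IsCoprime.mul_right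
    · have h1 : IsCoprime (-b ^ 2) a := (hab.symm.pow_left (m := 2)).neg_left
      have h2 := h1.add_mul_left_left a
      have e2 : a ^ 2 - b ^ 2 = -b ^ 2 + a * a := by ring
      rw [e2]
      exact h2
    · have h1 : IsCoprime (a ^ 2) b := hab.pow_left
      have h2 := h1.add_mul_left_left (-b)
      have e2 : a ^ 2 - b ^ 2 = a ^ 2 + b * (-b) := by ring
      rw [e2]
      exact h2
  have hmN : IsCoprime m' N := by
    have h1 : IsCoprime m' ((a * b) ^ 2) := (hdm.of_mul_left_right).pow_right
    have h2 := h1.add_mul_left_right (27 * m')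
    have e2 : N = (a * b) ^ 2 + m' * (27 * m') := by rw [hN]; ring
    rw [e2]
    exact h2
  obtain ⟨r, n, hr, hn, rfl, hNn, rfl⟩ := aux_pow m' N k 2 (by norm_num) hm0 hN0 hk0 hmN hk'
  rw [hN] at hNn
  clear_value N
  -- parity
  have hpar : a % 2 = 1 ∧ b % 2 = 1 ∧ r % 2 = 0 := by
    have sq4 : ∀ u : ℤ, (u % 2 = 0 ∧ u ^ 2 % 4 = 0) ∨ (u % 2 = 1 ∧ u ^ 2 % 4 = 1) := by
      intro u
      have : u % 4 = 0 ∨ u % 4 = 1 ∨ u % 4 = 2 ∨ u % 4 = 3 := by omega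
      rcases this with h | h | h | h
      · left; exact ⟨by omega, by simp [pow_succ, Int.mul_emod, h]⟩
      · right; exact ⟨by omega, by simp [pow_succ, Int.mul_emod, h]⟩
      · left; exact ⟨by omega, by simp [pow_succ, Int.mul_emod, h]⟩
      · right; exact ⟨by omega, by simp [pow_succ, Int.mul_emod, h]⟩
    have sa := sq4 a
    have sb := sq4 b
    have sr := sq4 r
    have sn := sq4 n
    have sab := sq4 (a * b)
    have hr4 := aux_fourth_mod16 r
    have hNn' : (a * b) ^ 2 + 27 * r ^ 4 = n ^ 2 := by linear_combination hNn
    have hnot : ¬ (a % 2 = 0 ∧ b % 2 = 0) := by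
      rintro ⟨h1, h2⟩
      have := hab.isUnit_of_dvd' (Int.dvd_of_emod_eq_zero h1) (Int.dvd_of_emod_eq_zero h2)
      norm_num [Int.isUnit_iff] at this
    have hmulp : (a * b) % 2 = (a % 2) * (b % 2) % 2 := Int.mul_emod a b 2
    rcases sa with ⟨sa, sa'⟩ | ⟨sa, sa'⟩ <;> rcases sb with ⟨sb, sb'⟩ | ⟨sb, sb'⟩ <;>
      rw [sa, sb] at hmulp <;> omega
  obtain ⟨hao, hbo, hre⟩ := hpar
  obtain ⟨s, rfl⟩ : ∃ s, r = 2 * s := ⟨r / 2, by omega⟩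
  obtain ⟨A, hA⟩ : ∃ A, a + b = 2 * A := ⟨(a + b) / 2, by omega⟩
  obtain ⟨B, hB⟩ : ∃ B, a - b = 2 * B := ⟨(a - b) / 2, by omega⟩
  have haA : a = A + B := by linarith
  have hbA : b = A - B := by linarith
  subst haA hbA
  have hAB : A * B = 9 * s ^ 2 := by
    apply mul_left_cancel₀ (four_ne_zero (α := ℤ))
    linear_combination hm
  have hs : 0 < s := by omega
  have hA0 : 0 < A := by omega
  have hB0 : 0 < B := by
    have : 0 < A * B := by rw [hAB]; positivity
    exact (pos_iff_pos_of_mul_pos this).mp hA0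
  have hABc : IsCoprime A B := by
    obtain ⟨u, v, huv⟩ := hab
    exact ⟨u + v, u - v, by linear_combination huv⟩
  have fin : ∀ X Y : ℤ, 0 < X → 0 < Y → IsCoprime X Y → X * (9 * Y) = 9 * s ^ 2 →
      ¬ (3 : ℤ) ∣ X → (X + 9 * Y) % 2 = 1 →
      ((X + 9 * Y) * (X - 9 * Y)) ^ 2 = ((A + B) * (A - B)) ^ 2 → False := by
    intro X Y hX hY hc hp h3 ho hsq
    obtain ⟨x, y, hx, hy, rfl, rfl, rfl⟩ := aux_pow X Y s 2 (by norm_num) hX hY hs hc (by linarith)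
    have hx2 : x ^ 2 % 2 = x % 2 := by
      rcases Int.emod_two_eq_zero_or_one x with h | h <;> simp [pow_succ, Int.mul_emod, h]
    have hy2 : y ^ 2 % 2 = y % 2 := by
      rcases Int.emod_two_eq_zero_or_one y with h | h <;> simp [pow_succ, Int.mul_emod, h]
    refine aux_second x y n hx hy ((IsCoprime.pow_iff (by norm_num) (by norm_num)).mp hc)
      (fun h => h3 (dvd_pow h (by norm_num))) (by omega) hn ?_
    linear_combination (-1) * hNn - hsq
  by_cases h3 : (3 : ℤ) ∣ A
  · have h3B : ¬ (3 : ℤ) ∣ B := by omega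
    have h9 : (9 : ℤ) ∣ A := by
      have hc : IsCoprime ((3 : ℤ) ^ 2) B := (aux_cop3 B h3B).pow_left
      norm_num at hc
      exact hc.dvd_of_dvd_mul_right ⟨_, hAB⟩
    obtain ⟨Y, rfl⟩ := h9
    exact fin B Y hB0 (by omega) hABc.symm.of_mul_right_right (by linarith) h3B (by omega) (by ring)
  · have h9 : (9 : ℤ) ∣ B := by
      have hc : IsCoprime ((3 : ℤ) ^ 2) A := (aux_cop3 A h3).pow_left
      norm_num at hc
      exact hc.dvd_of_dvd_mul_left ⟨_, hAB⟩
    obtain ⟨Y, rfl⟩ := h9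
    exact fin A Y hA0 (by omega) hABc.of_mul_right_right hAB h3 (by omega) (by ring)

/-- The only rational points on the genus-2 hyperelliptic curve
`v² = 3(t − 1)(t + 1)(t² − t + 1)(t² + t + 1)`, i.e. `v² = 3(t⁶ − 1)`, are the two
Weierstrass points `(1, 0)` and `(−1, 0)`. -/
theorem stmt_13 (t v : ℚ) :
    v ^ 2 = 3 * ((t - 1) * (t + 1) * (t ^ 2 - t + 1) * (t ^ 2 + t + 1)) ↔
      (t = 1 ∧ v = 0) ∨ (t = -1 ∧ v = 0) := by
  constructor
  · intro h
    have h6 : v ^ 2 = 3 * (t ^ 6 - 1) := by rw [h]; ring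
    have hv : v = 0 := by
      by_contra hv
      have ht0 : t ≠ 0 := by
        rintro rfl
        have := sq_nonneg v
        norm_num at h6
        linarith
      have hd0 : (t.den : ℚ) ≠ 0 := by exact_mod_cast t.den_ne_zero
      have hnd : (t.num : ℚ) = t * t.den := (Rat.mul_den_eq_num t).symm
      have hsq : (v * t.den ^ 3) ^ 2 = ((3 * (|t.num| ^ 6 - (t.den : ℤ) ^ 6) : ℤ) : ℚ) := by
        have habs : (|t.num|) ^ 6 = t.num ^ 6 := by
          rw [← abs_pow]; exact abs_of_nonneg (by positivity)
        rw [habs]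
        push_cast
        rw [hnd]
        linear_combination (t.den : ℚ) ^ 6 * h6
      have hS : IsSquare (3 * (|t.num| ^ 6 - (t.den : ℤ) ^ 6)) := by
        rw [← Rat.isSquare_intCast_iff, ← hsq]
        exact ⟨_, pow_two _⟩
      obtain ⟨w, hw⟩ := hS
      have hw0 : w ≠ 0 := by
        rintro rfl
        rw [hw] at hsq
        have : v * (t.den : ℚ) ^ 3 ≠ 0 := mul_ne_zero hv (pow_ne_zero _ hd0)
        simp_all
      refine aux_first |t.num| t.den |w| (abs_pos.mpr (Rat.num_ne_zero.mpr ht0))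
        (by exact_mod_cast t.den_pos) ?_ (abs_pos.mpr hw0) (by rw [sq_abs, hw]; ring)
      have hr := t.reduced
      rw [Int.abs_eq_natAbs]
      exact Nat.isCoprime_iff_coprime.mpr hr
    subst hv
    have h1 : t ^ 6 = 1 := by linarith
    have h2 : (t - 1) * (t + 1) = 0 := by
      have h3 : (t ^ 2 - 1) * (t ^ 4 + t ^ 2 + 1) = 0 := by linear_combination h1
      have h4 : t ^ 4 + t ^ 2 + 1 ≠ 0 := by positivity
      have := (mul_eq_zero.mp h3).resolve_right h4
      linear_combination this
    rcases mul_eq_zero.mp h2 with h | h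
    · left; exact ⟨by linarith, rfl⟩
    · right; exact ⟨by linarith, rfl⟩
  · rintro (⟨rfl, rfl⟩ | ⟨rfl, rfl⟩) <;> norm_num
end

section
/- The affine rational points on the elliptic curve defined by v² = u³ + 1 are exactly (0, 1), (0, −1), (2, 3), (2, −3), and (−1, 0). That is, for u, v ∈ ℚ, v² = u³ + 1 holds if and only if (u, v) is one of these five pairs. -/
lemma pow_split {A B k : ℤ} (n : ℕ) (hn : Even n) (hn0 : n ≠ 0) (hA : 0 < A)
    (h : IsCoprime A B) (e : A * B = k ^ n) : ∃ x : ℤ, 0 < x ∧ A = x ^ n := by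
  obtain ⟨d, hd⟩ := exists_associated_pow_of_mul_eq_pow' h e
  have hd0 : 0 ≤ d ^ n := hn.pow_nonneg d
  have hdA : d ^ n = A := by
    rcases Int.associated_iff.1 hd with h | h
    · exact h
    · linarith
  refine ⟨|d|, ?_, ?_⟩
  · rw [abs_pos]
    rintro rfl
    rw [zero_pow hn0] at hdA
    omega
  · rw [hn.pow_abs, hdA]

lemma split_four {A B k : ℤ} (hA : 0 < A) (hB : 0 < B) (hk : 0 < k)
    (h : IsCoprime A B) (e : A * B = k ^ 4) :
    ∃ x y : ℤ, 0 < x ∧ 0 < y ∧ A = x ^ 4 ∧ B = y ^ 4 ∧ k = x * y := by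
  obtain ⟨x, hx, rfl⟩ := pow_split 4 (by decide) (by decide) hA h e
  obtain ⟨y, hy, rfl⟩ := pow_split 4 (by decide) (by decide) hB h.symm ((mul_comm _ _).trans e)
  refine ⟨x, y, hx, hy, rfl, rfl, ?_⟩
  rw [← mul_pow] at e
  exact ((pow_left_inj₀ (by positivity) hk.le (by decide)).1 e).symm

lemma split_three {A B k : ℤ} (hA : 0 < A) (hB : 0 < B) (hk : 0 < k)
    (h : IsCoprime A B) (e : A * B = 3 * k ^ 4) :
    ∃ x y : ℤ, 0 < x ∧ 0 < y ∧ IsCoprime (3 * x) y ∧ k = x * y ∧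
      ((A = 3 * x ^ 4 ∧ B = y ^ 4) ∨ (A = y ^ 4 ∧ B = 3 * x ^ 4)) := by
  have key : ∀ A B : ℤ, 0 < A → 0 < B → IsCoprime A B → A * B = 3 * k ^ 4 → 3 ∣ A →
      ∃ x y : ℤ, 0 < x ∧ 0 < y ∧ IsCoprime (3 * x) y ∧ k = x * y ∧ A = 3 * x ^ 4 ∧ B = y ^ 4 := by
    rintro _ B hA hB h e ⟨A, rfl⟩
    obtain ⟨x, y, hx, hy, rfl, rfl, hk⟩ := split_four (A := A) (B := B) (by omega) hB hk
      h.of_mul_left_right (by linarith)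
    refine ⟨x, y, hx, hy, ?_, hk, rfl, rfl⟩
    rw [IsCoprime.pow_right_iff (by decide)] at h
    exact IsCoprime.mul_left h.of_mul_left_left
      ((IsCoprime.pow_left_iff (by decide)).1 h.of_mul_left_right)
  rcases Int.prime_three.dvd_or_dvd (show (3 : ℤ) ∣ A * B from ⟨_, e⟩) with h3 | h3
  · obtain ⟨x, y, a, b, c, d, e, f⟩ := key A B hA hB h e h3
    exact ⟨x, y, a, b, c, d, .inl ⟨e, f⟩⟩
  · obtain ⟨x, y, a, b, c, d, e, f⟩ := key B A hB hA h.symm ((mul_comm _ _).trans e) h3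
    exact ⟨x, y, a, b, c, d, .inr ⟨f, e⟩⟩

lemma prime_dvd {A B k p : ℤ} (hp : Prime p) (hA : p ∣ A) (hB : p ∣ B)
    (e : A * B = 3 * k ^ 4) : p ∣ k := by
  by_contra hk
  have hc : IsCoprime p k := hp.coprime_iff_not_dvd.2 hk
  have hc2 : IsCoprime (p * p) (k ^ 4) := IsCoprime.mul_left hc.pow_right hc.pow_right
  have h3 : p * p ∣ 3 := hc2.dvd_of_dvd_mul_right (e ▸ mul_dvd_mul hA hB)
  have h4 := Int.le_of_dvd (by norm_num) h3
  have h5 : p ≤ 1 := by nlinarith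
  have h6 : -1 ≤ p := by nlinarith
  interval_cases p
  · exact hp.not_isUnit (by simp)
  · exact hp.ne_zero rfl
  · exact hp.not_isUnit (by simp)

lemma pos_pair {A B k : ℤ} (hk : 0 < k) (e : A * B = 3 * k ^ 4) (hs : 0 < A + B) :
    0 < A ∧ 0 < B := by
  have : 0 < A * B := by rw [e]; positivity
  rcases pos_and_pos_or_neg_and_neg_of_mul_pos this with h | h
  · exact h
  · omega

lemma no_three {y t a : ℤ} (h : IsCoprime 3 y) (e : a ^ 2 + y ^ 4 = 3 * t) : False := by
  have hy : ¬ (3 : ℤ) ∣ y := Int.prime_three.coprime_iff_not_dvd.1 h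
  have h1 : (a ^ 2 + y ^ 4) % 3 = 0 := by omega
  have h2 : y % 3 = 1 ∨ y % 3 = 2 := by omega
  have h3 : a % 3 = 0 ∨ a % 3 = 1 ∨ a % 3 = 2 := by omega
  rcases h2 with h2 | h2 <;> rcases h3 with h3 | h3 | h3 <;>
    simp [pow_succ, Int.add_emod, Int.mul_emod, h2, h3] at h1

/-- Second half of the descent. -/
lemma half2 {x y M r : ℤ} (hx : 0 < x) (hr : 0 < r) (hM : 0 < M)
    (hc : IsCoprime x y) (c : ℤ) (hN : c * M = y ^ 2 + 3 * x ^ 2)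
    {A B : ℤ} (hAB : A + B = c * M) (hs : 0 < A + B) (e : A * B = 3 * x ^ 4) :
    ∃ p q : ℤ, 0 < p ∧ 0 < q ∧ IsCoprime q p ∧ x = p * q ∧
      q ^ 4 - 3 * q ^ 2 * p ^ 2 + 3 * p ^ 4 = y ^ 2 := by
  obtain ⟨hA, hB⟩ := pos_pair hx e hs
  have hcop : IsCoprime A B := by
    refine isCoprime_of_prime_dvd (by omega) fun p hp h1 h2 => ?_
    have h3 := prime_dvd hp h1 h2 e
    have h4 : p ∣ y ^ 2 := by
      have : y ^ 2 = A + B - 3 * x * x := by rw [hAB, hN]; ring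
      rw [this]
      exact dvd_sub (dvd_add h1 h2) (h3.mul_left _)
    exact hp.not_isUnit (hc.isUnit_of_dvd' h3 (hp.dvd_of_dvd_pow h4))
  obtain ⟨p, q, hp, hq, hpq, hk, h⟩ := split_three hA hB hx hcop e
  refine ⟨p, q, hp, hq, hpq.of_mul_left_right.symm, hk, ?_⟩
  have : A + B = 3 * p ^ 4 + q ^ 4 := by rcases h with ⟨h, h'⟩ | ⟨h, h'⟩ <;> rw [h, h'] ; ring
  have h2 : y ^ 2 = 3 * p ^ 4 + q ^ 4 - 3 * x ^ 2 := by linarith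
  rw [h2, hk]; ring

lemma step {r s w : ℤ} (hr : 0 < r) (hs : 0 < s) (hw : 0 < w) (hc : IsCoprime r s)
    (e : r ^ 4 - 3 * r ^ 2 * s ^ 2 + 3 * s ^ 4 = w ^ 2) :
    ∃ p q y : ℤ, 0 < p ∧ 0 < q ∧ 0 < y ∧ IsCoprime q p ∧
      q ^ 4 - 3 * q ^ 2 * p ^ 2 + 3 * p ^ 4 = y ^ 2 ∧
      ((s = p * q * y ∧ 4 * r ^ 2 = y ^ 4 + 6 * (p * q) ^ 2 * y ^ 2 - 3 * (p * q) ^ 4) ∨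
       (s = 2 * (p * q * y) ∧ r ^ 2 = y ^ 4 + 6 * (p * q) ^ 2 * y ^ 2 - 3 * (p * q) ^ 4)) := by
  have hws : ∀ p : ℤ, Prime p → p ∣ w → p ∣ s → False := by
    intro p hp h1 h2
    have h3 : p ∣ r ^ 4 := by
      have : r ^ 4 = w * w + s * (3 * r ^ 2 * s - 3 * s ^ 3) := by linear_combination e
      rw [this]
      exact dvd_add (h1.mul_right _) (h2.mul_right _)
    exact hp.not_isUnit (hc.isUnit_of_dvd' (hp.dvd_of_dvd_pow h3) h2)
  rcases Int.even_or_odd s with ⟨z, hz⟩ | hodd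
  · have hz0 : 0 < z := by omega
    have hro : Odd r := by
      rw [← Int.not_even_iff_odd]
      rintro ⟨a, ha⟩
      exact Int.prime_two.not_isUnit (hc.isUnit_of_dvd' ⟨a, by omega⟩ ⟨z, by omega⟩)
    have hwo : Odd w := by
      rw [← Int.not_even_iff_odd]
      rintro ⟨a, ha⟩
      exact hws 2 Int.prime_two ⟨a, by omega⟩ ⟨z, by omega⟩
    obtain ⟨c, hcc⟩ : Even (w + r ^ 2) := hwo.add_odd hro.pow
    have e1 : (w - (c - 3 * z ^ 2)) * (c - 3 * z ^ 2) = 3 * z ^ 4 := by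
      have hcr : r ^ 2 = 2 * c - w := by linarith
      have : (r ^ 2) ^ 2 - 3 * r ^ 2 * s ^ 2 + 3 * s ^ 4 = w ^ 2 := by linear_combination e
      rw [hcr, show s = 2 * z by omega] at this
      linarith
    obtain ⟨hA, hB⟩ := pos_pair hz0 e1 (by linarith)
    have hcop : IsCoprime (w - (c - 3 * z ^ 2)) (c - 3 * z ^ 2) := by
      refine isCoprime_of_prime_dvd (by omega) fun p hp h1 h2 => ?_
      have h3 := prime_dvd hp h1 h2 e1
      have h4 := dvd_add h1 h2
      rw [sub_add_cancel] at h4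
      exact hws p hp h4 (hz ▸ dvd_add h3 h3)
    obtain ⟨x, y, hx, hy, hxy, hk, h⟩ := split_three hA hB hz0 hcop e1
    rcases h with ⟨h1, h2⟩ | ⟨h1, h2⟩
    · have hre : r ^ 2 = y ^ 4 + 6 * x ^ 2 * y ^ 2 - 3 * x ^ 4 := by
        have : r ^ 2 = (c - 3 * z ^ 2) - (w - (c - 3 * z ^ 2)) + 6 * z ^ 2 := by linarith
        rw [this, h1, h2, hk]; ring
      have hNe : Even (y ^ 2 + 3 * x ^ 2 + r) := by
        have : Even ((y ^ 2 + 3 * x ^ 2) ^ 2 - r ^ 2) :=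
          ⟨6 * x ^ 4, by rw [hre]; ring⟩
        have h5 : ¬ Even r := Int.not_even_iff_odd.2 hro
        have h6 : ¬ Even (y ^ 2 + 3 * x ^ 2) := by
          intro h7
          rw [Int.even_sub, Int.even_pow, Int.even_pow] at this
          tauto
        rw [Int.even_add]; tauto
      obtain ⟨a, ha⟩ := hNe
      obtain ⟨p, q, hp, hq, hpq, hxpq, hf⟩ := half2 (M := y ^ 2 + 3 * x ^ 2) (r := r) hx hr
        (by positivity) hxy.of_mul_left_right 1 (by ring) (A := a) (B := a - r)
        (by linarith) (by have : 0 < y ^ 2 + 3 * x ^ 2 := by positivity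
                          linarith)
        (by
          have h8 : r = 2 * a - (y ^ 2 + 3 * x ^ 2) := by linarith
          have h9 := hre
          rw [h8] at h9
          rw [h8]
          linarith)
      refine ⟨p, q, y, hp, hq, hy, hpq, hf, .inr ⟨?_, ?_⟩⟩
      · rw [hz, hk, hxpq]; ring
      · rw [hre, hxpq]
    · exfalso
      refine no_three hxy.of_mul_left_left (a := r) (t := 2 * z ^ 2 + x ^ 4) ?_
      linarith
  · have e1 : (2 * w - 2 * r ^ 2 + 3 * s ^ 2) * (2 * w + 2 * r ^ 2 - 3 * s ^ 2) = 3 * s ^ 4 := by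
      linear_combination (-4) * e
    obtain ⟨hA, hB⟩ := pos_pair hs e1 (by linarith)
    have h2s : IsCoprime 2 s := by
      rw [Int.prime_two.coprime_iff_not_dvd]
      obtain ⟨a, ha⟩ := hodd
      omega
    have hcop : IsCoprime (2 * w - 2 * r ^ 2 + 3 * s ^ 2) (2 * w + 2 * r ^ 2 - 3 * s ^ 2) := by
      refine isCoprime_of_prime_dvd (by omega) fun p hp h1 h2 => ?_
      have h3 := prime_dvd hp h1 h2 e1
      have h4 := dvd_add h1 h2
      rw [show 2 * w - 2 * r ^ 2 + 3 * s ^ 2 + (2 * w + 2 * r ^ 2 - 3 * s ^ 2) = 2 * (2 * w) by ring]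
        at h4
      have h5 : ¬ p ∣ 2 := fun h => hp.not_isUnit (h2s.isUnit_of_dvd' h h3)
      rcases hp.dvd_or_dvd h4 with h | h
      · exact h5 h
      rcases hp.dvd_or_dvd h with h | h
      · exact h5 h
      exact hws p hp h h3
    obtain ⟨x, y, hx, hy, hxy, hk, h⟩ := split_three hA hB hs hcop e1
    rcases h with ⟨h1, h2⟩ | ⟨h1, h2⟩
    · have hre : 4 * r ^ 2 = y ^ 4 + 6 * x ^ 2 * y ^ 2 - 3 * x ^ 4 := by
        have : 4 * r ^ 2 = (2 * w + 2 * r ^ 2 - 3 * s ^ 2) - (2 * w - 2 * r ^ 2 + 3 * s ^ 2)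
          + 6 * s ^ 2 := by ring
        rw [this, h1, h2, hk]; ring
      obtain ⟨hxo, hyo⟩ := Int.odd_mul.1 (hk ▸ hodd)
      obtain ⟨M, hM⟩ : Even (y ^ 2 + 3 * x ^ 2) :=
        hyo.pow.add_odd (Odd.mul (by decide) hxo.pow)
      have hNp : 0 < y ^ 2 + 3 * x ^ 2 := by positivity
      obtain ⟨p, q, hp, hq, hpq, hxpq, hf⟩ := half2 (M := M) (r := r) hx hr
        (by linarith) hxy.of_mul_left_right 2 (by linarith) (A := M + r) (B := M - r)
        (by linarith) (by linarith)
        (by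
          have h9 : (2 * M) ^ 2 = (y ^ 2 + 3 * x ^ 2) ^ 2 := by rw [hM]; ring
          linarith)
      refine ⟨p, q, y, hp, hq, hy, hpq, hf, .inl ⟨?_, ?_⟩⟩
      · rw [hk, hxpq]
      · rw [hre, hxpq]
    · exfalso
      refine no_three hxy.of_mul_left_left (a := 2 * r) (t := 2 * s ^ 2 + x ^ 4) ?_
      linarith

lemma descent (n : ℕ) : ∀ {r s w : ℤ}, s ≤ n → 0 < r → 0 < s → 0 < w → IsCoprime r s →
    r ^ 4 - 3 * r ^ 2 * s ^ 2 + 3 * s ^ 4 = w ^ 2 → r = 1 ∧ s = 1 := by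
  induction n with
  | zero => intro r s w h1 _ h2; simp at h1; omega
  | succ n ih =>
    intro r s w hn hr hs hw hc e
    obtain ⟨p, q, y, hp, hq, hy, hpq, hf, h⟩ := step hr hs hw hc e
    push_cast at hn
    have hqy : 0 < q * y := by positivity
    have hpqy : p ≤ p * q * y := by nlinarith
    have hone : p = 1 ∧ q = 1 := by
      by_cases hps : p < s
      · have := ih (by omega) hq hp hy hpq hf
        tauto
      · rcases h with ⟨h, -⟩ | ⟨h, -⟩
        · have h1 : p * (q * y) ≤ p * 1 := by linarith
          have h2 : q * y ≤ 1 := le_of_mul_le_mul_left h1 hp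
          have h3 : q = 1 := by nlinarith
          have h4 : y = 1 := by nlinarith
          subst h3 h4
          have h5 : p ^ 2 * (p ^ 2 - 1) = 0 := by linarith
          rcases mul_eq_zero.1 h5 with h6 | h6
          · have : 0 < p ^ 2 := by positivity
            omega
          · exact ⟨by nlinarith, rfl⟩
        · omega
    obtain ⟨rfl, rfl⟩ := hone
    have hy1 : y = 1 := by nlinarith
    subst hy1
    rcases h with ⟨h, h'⟩ | ⟨h, h'⟩
    · exact ⟨by nlinarith, by linarith⟩
    · exfalso
      have h2 : r = 2 := by nlinarith
      have h3 : s = 2 := by linarith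
      subst h2 h3
      exact Int.prime_two.not_isUnit (hc.isUnit_of_dvd' dvd_rfl dvd_rfl)

lemma quartic {r s w : ℤ} (hr : 0 < r) (hs : 0 < s) (hw : 0 < w) (hc : IsCoprime r s)
    (e : r ^ 4 - 3 * r ^ 2 * s ^ 2 + 3 * s ^ 4 = w ^ 2) : r = 1 ∧ s = 1 :=
  descent s.toNat (by omega) hr hs hw hc e

lemma int_case {c e b : ℤ} (hc : 0 < c) (he : 0 < e) (hce : IsCoprime c e)
    (h : c * (c ^ 2 - 3 * c * e ^ 2 + 3 * e ^ 4) = b ^ 2) : (c = 1 ∨ c = 3) ∧ e = 1 := by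
  by_cases h3 : (3 : ℤ) ∣ c
  · obtain ⟨d, rfl⟩ := h3
    have hd : 0 < d := by omega
    obtain ⟨b', rfl⟩ : (3 : ℤ) ∣ b := Int.prime_three.dvd_of_dvd_pow
      (n := 2) ⟨d * ((3 * d) ^ 2 - 3 * (3 * d) * e ^ 2 + 3 * e ^ 4), by rw [← h]; ring⟩
    have hde := hce.of_mul_left_right
    have h' : d * (3 * d ^ 2 - 3 * d * e ^ 2 + e ^ 4) = b' ^ 2 := by linarith
    have hcop : IsCoprime d (3 * d ^ 2 - 3 * d * e ^ 2 + e ^ 4) := by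
      rw [show 3 * d ^ 2 - 3 * d * e ^ 2 + e ^ 4 = e ^ 4 + d * (3 * d - 3 * e ^ 2) by ring]
      exact hde.pow_right.add_mul_left_right _
    have hQ : 0 < 3 * d ^ 2 - 3 * d * e ^ 2 + e ^ 4 := by
      have : 0 < d ^ 2 := by positivity
      nlinarith [sq_nonneg (2 * e ^ 2 - 3 * d)]
    obtain ⟨f, hf, hdf⟩ := pow_split 2 (by decide) (by decide) hd hcop h'
    obtain ⟨w, hw, hqw⟩ := pow_split 2 (by decide) (by decide) hQ hcop.symm
      ((mul_comm _ _).trans h')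
    subst hdf
    obtain ⟨h1, h2⟩ := quartic he hf hw ((IsCoprime.pow_left_iff (by decide)).1 hde).symm
      (by rw [← hqw]; ring)
    subst h1 h2
    simp
  · have hcop : IsCoprime c (c ^ 2 - 3 * c * e ^ 2 + 3 * e ^ 4) := by
      rw [show c ^ 2 - 3 * c * e ^ 2 + 3 * e ^ 4 = 3 * e ^ 4 + c * (c - 3 * e ^ 2) by ring]
      refine IsCoprime.add_mul_left_right ?_ _
      exact (Int.prime_three.coprime_iff_not_dvd.2 h3).symm.mul_right hce.pow_right
    have hQ : 0 < c ^ 2 - 3 * c * e ^ 2 + 3 * e ^ 4 := by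
      have : 0 < c ^ 2 := by positivity
      nlinarith [sq_nonneg (2 * e ^ 2 - c)]
    obtain ⟨f, hf, hdf⟩ := pow_split 2 (by decide) (by decide) hc hcop h
    obtain ⟨w, hw, hqw⟩ := pow_split 2 (by decide) (by decide) hQ hcop.symm
      ((mul_comm _ _).trans h)
    subst hdf
    obtain ⟨h1, h2⟩ := quartic hf he hw ((IsCoprime.pow_left_iff (by decide)).1 hce)
      (by rw [← hqw]; ring)
    subst h1 h2
    simp

lemma u_cases {u v : ℚ} (h : v ^ 2 = u ^ 3 + 1) : u = 0 ∨ u = 2 ∨ u = -1 := by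
  have hden : v.den ^ 2 = u.den ^ 3 := by
    have := congrArg Rat.den h
    rw [show u ^ 3 + 1 = u ^ 3 + ((1 : ℤ) : ℚ) by simp, Rat.add_intCast_den, Rat.den_pow,
      Rat.den_pow] at this
    exact this
  obtain ⟨e, he, -⟩ : ∃ e : ℕ, u.den = e ^ 2 ∧ v.den = e ^ 3 := by
    have hd : u.den ∣ v.den := by
      rw [← Nat.pow_dvd_pow_iff (n := 2) (by decide), hden]
      exact pow_dvd_pow _ (by decide)
    obtain ⟨e, he⟩ := hd
    have hu := u.den_pos
    have : u.den = e ^ 2 := by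
      rw [he] at hden
      have : u.den ^ 2 * e ^ 2 = u.den ^ 2 * u.den := by linarith
      exact (Nat.eq_of_mul_eq_mul_left (by positivity) this).symm
    exact ⟨e, this, by rw [he, this]; ring⟩
  have he0 : 0 < e := by
    rcases Nat.eq_zero_or_pos e with h0 | h0
    · have := u.den_pos
      subst h0; simp at he
    · exact h0
  have heq : (e : ℚ) ≠ 0 := by positivity
  have hu : u * (e : ℚ) ^ 2 = u.num := by
    have := Rat.mul_den_eq_num u
    rw [he] at this
    exact_mod_cast this
  have hcop : IsCoprime u.num (e : ℤ) := by
    have h1 : IsCoprime u.num (u.den : ℤ) := Rat.isCoprime_num_den u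
    rw [he, Nat.cast_pow] at h1
    exact (IsCoprime.pow_right_iff (by decide)).1 h1
  have hsq : (v * (e : ℚ) ^ 3) ^ 2 = ((u.num ^ 3 + (e : ℤ) ^ 6 : ℤ) : ℚ) := by
    push_cast
    rw [← hu, mul_pow, h]; ring
  obtain ⟨b, hb⟩ : ∃ b : ℤ, u.num ^ 3 + (e : ℤ) ^ 6 = b ^ 2 := by
    have : IsSquare ((u.num ^ 3 + (e : ℤ) ^ 6 : ℤ) : ℚ) := ⟨_, by rw [← hsq, sq]⟩
    rw [Rat.isSquare_intCast_iff] at this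
    obtain ⟨b, hb⟩ := this
    exact ⟨b, by rw [hb, sq]⟩
  generalize hE : (e : ℤ) = E at *
  have hE0 : 0 < E := by omega
  have hEq : (e : ℚ) = (E : ℚ) := by rw [← hE]; simp
  rw [hEq] at hu heq
  have hprod : (u.num + E ^ 2) * ((u.num + E ^ 2) ^ 2 - 3 * (u.num + E ^ 2) * E ^ 2 + 3 * E ^ 4)
      = b ^ 2 := by rw [← hb]; ring
  have hcE : IsCoprime (u.num + E ^ 2) E := by
    rw [sq]; exact hcop.add_mul_right_left E
  rcases lt_trichotomy (u.num + E ^ 2) 0 with hlt | h0 | hgt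
  · exfalso
    have hQ : 0 < (u.num + E ^ 2) ^ 2 - 3 * (u.num + E ^ 2) * E ^ 2 + 3 * E ^ 4 := by
      have : 0 < E ^ 4 := by positivity
      nlinarith [sq_nonneg (2 * (u.num + E ^ 2) - 3 * E ^ 2)]
    nlinarith [mul_neg_of_neg_of_pos hlt hQ, sq_nonneg b]
  · right; right
    have h1 : (u.num : ℚ) = - (E : ℚ) ^ 2 := by
      have : u.num = - E ^ 2 := by linarith
      rw [this]; push_cast; ring
    rw [h1] at hu
    have : (u + 1) * (E : ℚ) ^ 2 = 0 := by linarith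
    rcases mul_eq_zero.1 this with h2 | h2
    · linarith
    · exact absurd h2 (by positivity)
  · obtain ⟨h1, h2⟩ := int_case hgt hE0 hcE hprod
    subst h2
    norm_num at hu
    rcases h1 with h1 | h1
    · left; rw [hu, show u.num = 0 by linarith]; simp
    · right; left; rw [hu, show u.num = 2 by linarith]; simp


/-- The affine rational points on the elliptic curve `v² = u³ + 1`
(Cremona label 36a1) are exactly `(0, ±1)`, `(2, ±3)` and `(−1, 0)`. -/
theorem stmt_14 (u v : ℚ) :
    v ^ 2 = u ^ 3 + 1 ↔
      (u = 0 ∧ v = 1) ∨ (u = 0 ∧ v = -1) ∨ (u = 2 ∧ v = 3) ∨ (u = 2 ∧ v = -3) ∨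
        (u = -1 ∧ v = 0) := by
  constructor
  · intro h
    rcases u_cases h with rfl | rfl | rfl
    · have : (v - 1) * (v + 1) = 0 := by linarith
      rcases mul_eq_zero.1 this with h | h
      · left; exact ⟨rfl, by linarith⟩
      · right; left; exact ⟨rfl, by linarith⟩
    · have : (v - 3) * (v + 3) = 0 := by linarith
      rcases mul_eq_zero.1 this with h | h
      · right; right; left; exact ⟨rfl, by linarith⟩
      · right; right; right; left; exact ⟨rfl, by linarith⟩
    · have : v ^ 2 = 0 := by linarith
      right; right; right; right
      exact ⟨rfl, by simpa using this⟩
  · rintro (⟨rfl, rfl⟩ | ⟨rfl, rfl⟩ | ⟨rfl, rfl⟩ | ⟨rfl, rfl⟩ | ⟨rfl, rfl⟩) <;> norm_num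
end
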